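/- For every integer n ≥ 7, the number of Dyck paths D ∈ D̂_n with x_1(D) = y_2(D) equals Σ_{i=0}^{n-7} (i+1)·M_i·M_{n-7-i}; moreover for n = 3 there is exactly one Dyck path D ∈ D̂_3 with x_1(D) = y_2(D). -/

import Mathlib

/-- A Dyck path of semilength `n`, encoded as a word on `Bool`
(`true` = up step `u`, `false` = down step `d`). -/
def IsDyckWord (n : ℕ) (w : List Bool) : Prop :=
  w.length = 2 * n ∧ w.count true = n ∧ w.count false = n ∧
    ∀ p : List Bool, p <+: w → p.count false ≤ p.count true

/-- The (0-based) indices of the up steps of `w`. -/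
def upIdxs (w : List Bool) : List ℕ := w.findIdxs (· == true)

/-- The (0-based) indices of the down steps of `w`. -/
def downIdxs (w : List Bool) : List ℕ := w.findIdxs (· == false)

/-- `rStat w i` is the number of `d`'s strictly between the `i`-th and the
`(i+1)`-st `u` of `w` (with `i` 1-indexed). -/
def rStat (w : List Bool) (i : ℕ) : ℕ :=
  ((w.take ((upIdxs w).getD i 0)).drop ((upIdxs w).getD (i - 1) 0 + 1)).count false

/-- `sStat w i` is the number of `u`'s strictly between the `i`-th and the
`(i+1)`-st `d` of `w` (with `i` 1-indexed). -/
def sStat (w : List Bool) (i : ℕ) : ℕ :=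
  ((w.take ((downIdxs w).getD i 0)).drop ((downIdxs w).getD (i - 1) 0 + 1)).count true

/-- The statistic `L(D) = ∏_{i=1}^{n-1} C(r_i + s_i, r_i)` of a Dyck path of semilength `n`. -/
def LStat (n : ℕ) (w : List Bool) : ℕ :=
  ∏ i ∈ Finset.Icc 1 (n - 1), Nat.choose (rStat w i + sStat w i) (rStat w i)

/-- `dyckL n k` = the set `𝒟ₙᵏ` of Dyck paths of semilength `n` with `L(D) = k`. -/
def dyckL (n k : ℕ) : Set (List Bool) := {w | IsDyckWord n w ∧ LStat n w = k}

/-- A Motzkin path, encoded as a word on `Option Bool`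
(`some true` = up, `some false` = down, `none` = horizontal). -/
def IsMotzkinWord (w : List (Option Bool)) : Prop :=
  w.count (some false) = w.count (some true) ∧
    ∀ p : List (Option Bool), p <+: w → p.count (some false) ≤ p.count (some true)

/-- `motzkin n` = the `n`-th Motzkin number `Mₙ`, the number of Motzkin paths of length `n`. -/
noncomputable def motzkin (n : ℕ) : ℕ :=
  {w : List (Option Bool) | w.length = n ∧ IsMotzkinWord w}.ncard

/-- The Motzkin ballot number `T_{n,k}`: the number of Motzkin paths of length `n`
whose first down step is in position `k` (1-indexed); by convention `T_{k-1,k} = 1`,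
counting the path of `k-1` horizontal steps. -/
noncomputable def motzkinBallot (n k : ℕ) : ℕ :=
  if n + 1 = k then 1
  else
    {w : List (Option Bool) | w.length = n ∧ IsMotzkinWord w ∧
      w.getD (k - 1) none = some false ∧ ∀ j < k - 1, w.getD j none ≠ some false}.ncard

/-- Motzkin numbers with integer index: `Mᵢ = 0` for `i < 0`. -/
noncomputable def motzkinZ (i : ℤ) : ℤ := if 0 ≤ i then (motzkin i.toNat : ℤ) else 0

/-- Motzkin ballot numbers with integer first index: `T_{n,k} = 0` for `n < 0`. -/
noncomputable def motzkinBallotZ (n : ℤ) (k : ℕ) : ℤ :=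
  if 0 ≤ n then (motzkinBallot n.toNat k : ℤ) else 0

/-- The set of returns of a Dyck path `w` of semilength `n`:
indices `1 ≤ k ≤ n` such that the path touches the `x`-axis after `2k` steps. -/
def returns (n : ℕ) (w : List Bool) : Finset ℕ :=
  (Finset.Icc 1 n).filter fun k => (w.take (2 * k)).count false = (w.take (2 * k)).count true

/-- `dyckRS n r s` = the set `𝒟ₙ^{r,s}` of Dyck paths of semilength `n` having exactly one
index `i` with `rᵢ > 0` and `sᵢ > 0`, and such that at that index `rᵢ = r` and `sᵢ = s`. -/
def dyckRS (n r s : ℕ) : Set (List Bool) :=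
  {w | IsDyckWord n w ∧ ∃ i ∈ Finset.Icc 1 (n - 1),
    (0 < rStat w i ∧ 0 < sStat w i) ∧ rStat w i = r ∧ sStat w i = s ∧
      ∀ j ∈ Finset.Icc 1 (n - 1), 0 < rStat w j ∧ 0 < sStat w j → j = i}

/-- `twoStars n w k₁ k₂` says that `k₁ < k₂` are exactly the two indices `i` of `w`
with `rᵢ > 0` and `sᵢ > 0`. -/
def twoStars (n : ℕ) (w : List Bool) (k₁ k₂ : ℕ) : Prop :=
  k₁ ∈ Finset.Icc 1 (n - 1) ∧ k₂ ∈ Finset.Icc 1 (n - 1) ∧ k₁ < k₂ ∧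
    (0 < rStat w k₁ ∧ 0 < sStat w k₁) ∧ (0 < rStat w k₂ ∧ 0 < sStat w k₂) ∧
    ∀ j ∈ Finset.Icc 1 (n - 1), 0 < rStat w j ∧ 0 < sStat w j → j = k₁ ∨ j = k₂

/-- `xStat w k` = the number of indices `i < k` with `rᵢ = 0` and `sᵢ > 0`. -/
def xStat (w : List Bool) (k : ℕ) : ℕ :=
  ((Finset.Ico 1 k).filter fun i => rStat w i = 0 ∧ 0 < sStat w i).card

/-- `yStat w k` = the number of indices `i < k` with `rᵢ > 0` and `sᵢ = 0`. -/
def yStat (w : List Bool) (k : ℕ) : ℕ :=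
  ((Finset.Ico 1 k).filter fun i => 0 < rStat w i ∧ sStat w i = 0).card

/-- The generating function `m(x) = Σ Mₙ xⁿ` of the Motzkin numbers, over `ℚ`. -/
noncomputable def motzkinGF : PowerSeries ℚ := PowerSeries.mk fun n => (motzkin n : ℚ)

/-- For each occurrence of the letter `x` in `w`, whether it is the last letter of its run. -/
def runEnds (x : Bool) : List Bool → List Bool
  | [] => []
  | y :: w => if y = x then decide (w.head? ≠ some x) :: runEnds x w else runEnds x w

/-- The word is empty or its last letter is `true`. -/
def EndsTrue (l : List Bool) : Prop := l.getLast? ≠ some false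

/-- `follow l t` says that the `t`-th `true` of `l` (the beginning of `l` if `t = 0`)
is immediately followed by a `true`. -/
def follow : List Bool → ℕ → Bool
  | [], _ => false
  | b :: _, 0 => b
  | true :: l, t + 1 => follow l t
  | false :: l, t + 1 => follow l (t + 1)

lemma length_runEnds (x : Bool) (w : List Bool) : (runEnds x w).length = w.count x := by
  induction w with
  | nil => rfl
  | cons y w ih => by_cases h : y = x <;> simp [runEnds, h, ih]

lemma runEnds_append_not (x : Bool) (q v : List Bool) :
    runEnds x (q ++ (!x) :: v) = runEnds x q ++ runEnds x v := by
  induction q with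
  | nil => simp [runEnds]
  | cons y q ih =>
    by_cases h : y = x
    · cases q <;> simp_all [runEnds]
    · simp [runEnds, h, ih]

lemma runEnds_append_self (x : Bool) (q v : List Bool) :
    (runEnds x (q ++ x :: v)).take (q.count x) ++ [true] = runEnds x (q ++ [x]) := by
  induction q with
  | nil => simp [runEnds]
  | cons y q ih =>
    by_cases h : y = x
    · cases q <;> simp_all [runEnds]
    · simp [runEnds, h, ih]

lemma endsTrue_runEnds (x : Bool) (w : List Bool) : EndsTrue (runEnds x w) := by
  induction w with
  | nil => simp [EndsTrue, runEnds]
  | cons y w ih =>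
    by_cases h : y = x
    · cases hw : runEnds x w with
      | nil =>
        cases w with
        | nil => simp [EndsTrue, runEnds, h]
        | cons z w =>
          by_cases hz : z = x <;> simp_all [EndsTrue, runEnds]
      | cons a l => simp_all [EndsTrue, runEnds, List.getLast?_cons_cons]
    · simpa [runEnds, h] using ih

/-- Runs of the two letters alternate. -/
lemma count_runEnds_append_self (x : Bool) (q : List Bool) :
    (runEnds x (q ++ [x])).count true =
      (runEnds (!x) (q ++ [x])).count true + if (q ++ [x]).head? = some x then 1 else 0 := by
  induction q with
  | nil => simp [runEnds]
  | cons y q ih =>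
    cases q with
    | nil => cases x <;> cases y <;> simp [runEnds]
    | cons z q => cases x <;> cases y <;> cases z <;> simp_all [runEnds]

lemma runEnds_injective {w v : List Bool} (hh : w.head? = v.head?)
    (h : ∀ x, runEnds x w = runEnds x v) : w = v := by
  induction w generalizing v with
  | nil => cases v <;> simp_all
  | cons y w ih =>
    cases v with
    | nil => simp at hh
    | cons z v =>
      obtain rfl : y = z := by simpa using hh
      have hy := h y
      have hn := h (!y)
      simp only [runEnds, if_true, List.cons.injEq] at hy
      have hne : y ≠ !y := by cases y <;> simp
      simp only [runEnds, if_neg hne] at hn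
      have hall : ∀ x, runEnds x w = runEnds x v := by
        intro x
        rcases Bool.eq_or_eq_not x y with rfl | rfl
        · exact hy.2
        · exact hn
      congr 1
      apply ih _ hall
      cases w with
      | nil =>
        cases v with
        | nil => rfl
        | cons a v => simpa [runEnds] using hall a
      | cons b w =>
        cases v with
        | nil => simpa [runEnds] using hall b
        | cons a v =>
          cases a <;> cases b <;> cases y <;> simp_all

lemma EndsTrue.of_cons {a : Bool} {l : List Bool} (h : EndsTrue (a :: l)) : EndsTrue l := by
  cases l <;> simp_all [EndsTrue, List.getLast?_cons_cons]

lemma EndsTrue.eq_nil {l : List Bool} (h : EndsTrue l) (h0 : l.count true = 0) : l = [] := by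
  rcases List.eq_nil_or_concat l with rfl | ⟨l', b, rfl⟩
  · rfl
  · cases b <;> simp_all [EndsTrue]

lemma endsTrue_append_true (l : List Bool) : EndsTrue (l ++ [true]) := by
  simp [EndsTrue]

lemma exists_runEnds_eq (x : Bool) (f g : List Bool) (hf : f ≠ []) (hfe : EndsTrue f)
    (hge : EndsTrue g) (h1 : g.count true ≤ f.count true) (h2 : f.count true ≤ g.count true + 1) :
    ∃ w, w.head? = some x ∧ runEnds x w = f ∧ runEnds (!x) w = g := by
  cases f with
  | nil => exact absurd rfl hf
  | cons a f =>
    have hne : x ≠ !x := by cases x <;> simp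
    cases a with
    | false =>
      have hf' : f ≠ [] := by rintro rfl; simp [EndsTrue] at hfe
      obtain ⟨v, hv, hx, hn⟩ := exists_runEnds_eq x f g hf' hfe.of_cons hge
        (by simpa using h1) (by simpa using h2)
      exact ⟨x :: v, by simp, by simp [runEnds, hv, hx], by simp [runEnds, hn]⟩
    | true =>
      by_cases hg : g = []
      · subst hg
        have : f = [] := hfe.of_cons.eq_nil (by simp at h2; simpa using h2)
        subst this
        exact ⟨[x], by simp, by simp [runEnds], by simp [runEnds]⟩
      · obtain ⟨v, hv, hx, hn⟩ := exists_runEnds_eq (!x) g f hg hge hfe.of_cons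
          (by simp at h2; omega) (by simp at h1; omega)
        rw [Bool.not_not] at hn
        exact ⟨x :: v, by simp, by simp [runEnds, hv, hn], by simp [runEnds, hx]⟩
termination_by f.length + g.length
decreasing_by
  all_goals subst_vars; rw [List.length_cons]; omega

lemma follow_append_of_endsTrue {l : List Bool} (hl : EndsTrue l) (l' : List Bool) (s : ℕ) :
    follow (l ++ l') (l.count true + s) = follow l' s := by
  induction l with
  | nil => simp
  | cons b l ih =>
    cases b with
    | false =>
      have hl' : l ≠ [] := by rintro rfl; simp [EndsTrue] at hl
      have : l.count true ≠ 0 := fun h => hl' (hl.of_cons.eq_nil h)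
      rw [← ih hl.of_cons]
      obtain ⟨t, ht⟩ := Nat.exists_eq_succ_of_ne_zero this
      have : List.count true (false :: l) + s = t + s + 1 := by simp [ht]; omega
      rw [this, List.cons_append, follow, ht]
      congr 1; omega
    | true =>
      have : List.count true (true :: l) + s = l.count true + s + 1 := by simp; omega
      rw [this, List.cons_append, follow, ih hl.of_cons]

lemma follow_append_of_lt (l l' : List Bool) {t : ℕ} (ht : t < l.count true) :
    follow (l ++ l') t = follow l t := by
  induction l generalizing t with
  | nil => simp at ht
  | cons b l ih =>
    cases t with
    | zero => cases b <;> rfl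
    | succ t =>
      cases b with
      | false => exact ih (by simpa using ht)
      | true => exact ih (by simpa using ht)

lemma endsTrue_true_cons {l : List Bool} : EndsTrue (true :: l) ↔ EndsTrue l := by
  cases l <;> simp [EndsTrue, List.getLast?_cons_cons]

lemma endsTrue_false_cons {l : List Bool} : EndsTrue (false :: l) ↔ EndsTrue l ∧ l ≠ [] := by
  cases l <;> simp [EndsTrue, List.getLast?_cons_cons]

lemma follow_append_true (l l' : List Bool) :
    follow (l ++ true :: l') (l.count true) = true ↔ EndsTrue l := by
  induction l with
  | nil => simp [follow, EndsTrue]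
  | cons b l ih =>
    cases b with
    | true => rw [endsTrue_true_cons, ← ih, List.count_cons_self]; rfl
    | false =>
      rw [endsTrue_false_cons, ← ih, List.count_cons_of_ne (by simp)]
      cases h : l.count true with
      | zero =>
        refine ⟨fun h' => by simp [follow] at h', fun h' => ?_⟩
        rw [h] at ih
        exact absurd ((ih.1 h'.1).eq_nil h) h'.2
      | succ t =>
        have : l ≠ [] := by rintro rfl; simp at h
        simp [follow, this]

/-- The number of letters other than `x` between the `i`-th and the `(i+1)`-st `x` of `w`. -/
def gapStat (x : Bool) (w : List Bool) (i : ℕ) : ℕ :=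
  ((w.take ((w.findIdxs (· == x)).getD i 0)).drop
    ((w.findIdxs (· == x)).getD (i - 1) 0 + 1)).count (!x)

lemma rStat_eq_gapStat (w : List Bool) (i : ℕ) : rStat w i = gapStat true w i := rfl

lemma sStat_eq_gapStat (w : List Bool) (i : ℕ) : sStat w i = gapStat false w i := rfl

lemma length_findIdxs_beq (x : Bool) (p : List Bool) (s : ℕ) :
    (p.findIdxs (· == x) s).length = p.count x := by
  induction p generalizing s with
  | nil => simp
  | cons y p ih => by_cases h : y = x <;> simp [List.findIdxs_cons, h, ih]

lemma getD_findIdxs_append_cons (x : Bool) (p v : List Bool) :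
    ((p ++ x :: v).findIdxs (· == x)).getD (p.count x) 0 = p.length := by
  rw [List.findIdxs_append, List.getD_append_right _ _ _ _ (length_findIdxs_beq x p 0).le,
    length_findIdxs_beq]
  simp [List.findIdxs_cons]

lemma exists_eq_append_cons_of_lt_count (x : Bool) {w : List Bool} {i : ℕ} (h : i < w.count x) :
    ∃ p v, w = p ++ x :: v ∧ p.count x = i := by
  induction w generalizing i with
  | nil => simp at h
  | cons y w ih =>
    by_cases hy : y = x
    · subst hy
      cases i with
      | zero => exact ⟨[], w, by simp⟩
      | succ i =>
        obtain ⟨p, v, rfl, hp⟩ := ih (i := i) (by simpa using h)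
        exact ⟨y :: p, v, by simp, by simp [hp]⟩
    · obtain ⟨p, v, rfl, hp⟩ := ih (i := i) (by simpa [hy] using h)
      exact ⟨y :: p, v, by simp, by simp [hp, hy]⟩

lemma eq_replicate_not_of_count_eq_zero {x : Bool} {l : List Bool} (h : l.count x = 0) :
    l = List.replicate l.length (!x) := by
  rw [List.eq_replicate_iff]
  refine ⟨rfl, fun b hb => ?_⟩
  rcases Bool.eq_or_eq_not b x with rfl | rfl
  · exact absurd hb (List.count_eq_zero.1 h)
  · rfl

lemma exists_gap_decomposition (x : Bool) {w : List Bool} {i : ℕ} (h : i + 1 < w.count x) :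
    ∃ p m q, w = p ++ x :: (List.replicate m (!x) ++ x :: q) ∧ p.count x = i := by
  obtain ⟨p, v, rfl, hp⟩ := exists_eq_append_cons_of_lt_count x (Nat.lt_of_succ_lt h)
  have hv : 0 < v.count x := by
    rw [List.count_append, List.count_cons_self, hp] at h; omega
  obtain ⟨l, q, rfl, hl⟩ := exists_eq_append_cons_of_lt_count x hv
  exact ⟨p, l.length, q, by rw [← eq_replicate_not_of_count_eq_zero hl], hp⟩

lemma gapStat_eq (x : Bool) (p q : List Bool) (m : ℕ) :
    gapStat x (p ++ x :: (List.replicate m (!x) ++ x :: q)) (p.count x + 1) = m := by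
  have h1 := getD_findIdxs_append_cons x p (List.replicate m (!x) ++ x :: q)
  have h2 := getD_findIdxs_append_cons x (p ++ x :: List.replicate m (!x)) q
  have hc : (p ++ x :: List.replicate m (!x)).count x = p.count x + 1 := by
    simp [List.count_replicate]
  rw [hc] at h2
  simp only [List.append_assoc, List.cons_append] at h2
  rw [gapStat, Nat.add_sub_cancel, h1, h2]
  have h3 : p ++ x :: (List.replicate m (!x) ++ x :: q)
      = (p ++ x :: List.replicate m (!x)) ++ x :: q := by simp
  have h4 : p ++ x :: List.replicate m (!x) = (p ++ [x]) ++ List.replicate m (!x) := by simp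
  rw [h3, List.take_left, h4, List.drop_left' (by simp)]
  simp

lemma runEnds_take_count (x : Bool) (p v : List Bool) :
    (runEnds x (p ++ x :: v))[p.count x]? = some (decide (v.head? ≠ some x)) := by
  induction p with
  | nil => simp [runEnds]
  | cons y p ih => by_cases h : y = x <;> simp [runEnds, h, ih]

lemma count_take_runEnds (x : Bool) (p v : List Bool) :
    ((runEnds x (p ++ x :: v)).take (p.count x)).count true +
      (if (p ++ x :: v).head? = some x then 0 else 1) = (runEnds (!x) p).count true := by
  have h1 := congrArg (List.count true) (runEnds_append_self x p v)
  have h2 := count_runEnds_append_self x p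
  have h3 := runEnds_append_not (!x) p []
  rw [Bool.not_not] at h3
  have h4 : (p ++ x :: v).head? = (p ++ [x]).head? := by cases p <;> simp
  rw [h4]
  rw [h3] at h2
  simp [runEnds] at h1 h2
  split_ifs at h2 ⊢ <;> simp_all

lemma gapStat_pos_iff (x : Bool) {w : List Bool} {i : ℕ} (h : i + 1 < w.count x) :
    0 < gapStat x w (i + 1) ↔ (runEnds x w)[i]? = some true := by
  obtain ⟨p, m, q, rfl, rfl⟩ := exists_gap_decomposition x h
  rw [gapStat_eq, runEnds_take_count]
  cases m <;> simp [List.replicate_succ]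

lemma gapStat_eq_one_iff (x : Bool) {w : List Bool} {i : ℕ} (h : i + 1 < w.count x)
    (hpos : 0 < gapStat x w (i + 1)) :
    gapStat x w (i + 1) = 1 ↔ follow (runEnds (!x) w) (((runEnds x w).take i).count true +
      if w.head? = some x then 0 else 1) = true := by
  obtain ⟨p, m, q, rfl, rfl⟩ := exists_gap_decomposition x h
  rw [count_take_runEnds]
  rw [gapStat_eq] at hpos ⊢
  have h3 := runEnds_append_not (!x) p (List.replicate m (!x) ++ x :: q)
  rw [Bool.not_not] at h3
  have h4 := follow_append_of_endsTrue (endsTrue_runEnds (!x) p)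
    (runEnds (!x) (List.replicate m (!x) ++ x :: q)) 0
  rw [Nat.add_zero] at h4
  rw [h3, h4]
  match m, hpos with
  | 1, _ => simp [runEnds, follow]
  | m + 2, _ => simp [runEnds, follow, List.replicate_succ]

/-- Every Dyck word of positive semilength starts with an up step. -/
lemma IsDyckWord.head? {n : ℕ} {w : List Bool} (hw : IsDyckWord n w) (hn : 0 < n) :
    w.head? = some true := by
  obtain ⟨h0, h1, h2, h3⟩ := hw
  cases w with
  | nil => simp at h0; omega
  | cons b w =>
    cases b with
    | true => rfl
    | false => simpa using h3 [false] (by simp)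

lemma dominates_runEnds_of_isDyckWord {n : ℕ} {w : List Bool} (hw : IsDyckWord n w) (hn : 0 < n)
    {i : ℕ} (hi : i < n) :
    ((runEnds true w).take i).count true ≤ ((runEnds false w).take i).count true := by
  have hh := hw.head? hn
  obtain ⟨-, -, hd, hp⟩ := hw
  obtain ⟨q, v, rfl, rfl⟩ := exists_eq_append_cons_of_lt_count false (w := w) (i := i) (by omega)
  have hm : q.count false + 1 ≤ q.count true := by simpa using hp (q ++ [false]) (by simp)
  have hc := count_take_runEnds false q v
  rw [hh] at hc
  have ht : runEnds true (q ++ false :: v) = runEnds true q ++ runEnds true v :=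
    runEnds_append_not true q v
  have he := endsTrue_runEnds true q
  have hl := length_runEnds true q
  simp only [Bool.not_false, reduceCtorEq, Option.some.injEq, if_false] at hc
  rw [ht, List.take_append_of_le_length (by omega)]
  rcases List.eq_nil_or_concat (runEnds true q) with h | ⟨l, b, h⟩
  · simp [h]
  · rw [List.concat_eq_append] at h
    rw [h] at he hl hc ⊢
    have hb : b = true := by cases b <;> simp_all [EndsTrue]
    subst hb
    simp at hl hc
    rw [List.take_append_of_le_length (by omega)]
    have := (List.take_sublist (q.count false) l).count_le true
    simp_all

lemma isDyckWord_of_dominates {n : ℕ} {w : List Bool} (hh : w.head? = some true)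
    (ht : w.count true = n) (hf : w.count false = n)
    (hd : ∀ i < n, ((runEnds true w).take i).count true ≤ ((runEnds false w).take i).count true) :
    IsDyckWord n w := by
  refine ⟨?_, ht, hf, fun p => ?_⟩
  · have := List.count_true_add_count_false w
    omega
  · induction p using List.reverseRecOn with
    | nil => simp
    | append_singleton q b ih =>
      intro hp
      have ih' := ih ((List.prefix_append q [b]).trans hp)
      cases b with
      | true => simp; omega
      | false =>
        obtain ⟨v, rfl⟩ := hp
        simp only [List.append_assoc, List.cons_append, List.nil_append] at *
        by_contra hlt
        simp at hlt
        have heq : q.count false = q.count true := by omega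
        have hlt' : q.count true < n := by
          rw [← hf]; simp; omega
        have hd := hd _ hlt'
        have hc := count_take_runEnds false q v
        have ht : runEnds true (q ++ false :: v) = runEnds true q ++ runEnds true v :=
          runEnds_append_not true q v
        rw [hh, heq] at hc
        rw [ht, List.take_left' (length_runEnds true q)] at hd
        simp at hc
        omega

/-- The word on `Bool × Bool` recording, for each `1 ≤ i < n`, whether the `i`-th up step
and the `i`-th down step end a run. -/
def columns (w : List Bool) : List (Bool × Bool) :=
  ((runEnds true w).zip (runEnds false w)).dropLast

/-- The number of columns whose first entry is `true`. -/
def fstCount (c : List (Bool × Bool)) : ℕ := (c.map Prod.fst).count true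

/-- The number of columns whose second entry is `true`. -/
def sndCount (c : List (Bool × Bool)) : ℕ := (c.map Prod.snd).count true

/-- The column words that come from Dyck words of semilength `n`. -/
def IsColumnWord (n : ℕ) (c : List (Bool × Bool)) : Prop :=
  c.length + 1 = n ∧ fstCount c = sndCount c ∧ ∀ p, p <+: c → fstCount p ≤ sndCount p

lemma EndsTrue.eq_append {l : List Bool} (h : EndsTrue l) (hl : l ≠ []) :
    ∃ m, l = m ++ [true] := by
  rcases List.eq_nil_or_concat l with rfl | ⟨m, b, rfl⟩
  · exact absurd rfl hl
  · cases b <;> simp_all [EndsTrue]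

lemma columns_spec {n : ℕ} {w : List Bool} (hw : IsDyckWord n w) (hn : 0 < n) :
    (columns w).length + 1 = n ∧ runEnds true w = (columns w).map Prod.fst ++ [true] ∧
      runEnds false w = (columns w).map Prod.snd ++ [true] := by
  have l1 := length_runEnds true w
  have l2 := length_runEnds false w
  rw [hw.2.1] at l1
  rw [hw.2.2.1] at l2
  obtain ⟨a, ha⟩ := (endsTrue_runEnds true w).eq_append (by rintro h; simp [h] at l1; omega)
  obtain ⟨b, hb⟩ := (endsTrue_runEnds false w).eq_append (by rintro h; simp [h] at l2; omega)
  rw [ha] at l1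
  rw [hb] at l2
  simp at l1 l2
  have hab : a.length = b.length := by omega
  have hc : columns w = a.zip b := by
    rw [columns, ha, hb, List.zip_append hab]; simp
  rw [hc, ha, hb, List.map_fst_zip hab.le, List.map_snd_zip hab.ge]
  simp [hab, l2]

lemma IsDyckWord.exists_eq_append {n : ℕ} {w : List Bool} (hw : IsDyckWord n w) (hn : 0 < n) :
    ∃ q, w = q ++ [false] := by
  obtain ⟨h0, h1, h2, h3⟩ := hw
  rcases List.eq_nil_or_concat w with rfl | ⟨q, b, rfl⟩
  · simp at h0; omega
  · rw [List.concat_eq_append] at *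
    cases b with
    | false => exact ⟨q, rfl⟩
    | true =>
      have := h3 q (by simp)
      simp at h1 h2
      omega

lemma take_map_append_true (c : List (Bool × Bool)) (f : Bool × Bool → Bool) {i : ℕ}
    (hi : i ≤ c.length) : (c.map f ++ [true]).take i = (c.take i).map f := by
  rw [List.take_append_of_le_length (by simpa using hi), List.map_take]

lemma isColumnWord_columns {n : ℕ} {w : List Bool} (hw : IsDyckWord n w) (hn : 0 < n) :
    IsColumnWord n (columns w) := by
  obtain ⟨hl, ht, hf⟩ := columns_spec hw hn
  refine ⟨hl, ?_, fun p hp => ?_⟩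
  · obtain ⟨q, hq⟩ := hw.exists_eq_append hn
    have := count_runEnds_append_self false q
    rw [← hq, hw.head? hn, hf, Bool.not_false, ht] at this
    simp at this
    exact this.symm
  · have hd := dominates_runEnds_of_isDyckWord hw hn (i := p.length)
      (by have := hp.length_le; omega)
    rw [ht, hf, take_map_append_true _ _ hp.length_le, take_map_append_true _ _ hp.length_le,
      ← List.prefix_iff_eq_take.1 hp] at hd
    exact hd

lemma columns_bijOn {n : ℕ} (hn : 0 < n) :
    Set.BijOn columns {w | IsDyckWord n w} {c | IsColumnWord n c} := by
  refine ⟨fun w hw => isColumnWord_columns hw hn, fun w hw v hv h => ?_, fun c hc => ?_⟩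
  · obtain ⟨-, h1, h2⟩ := columns_spec hw hn
    obtain ⟨-, h3, h4⟩ := columns_spec hv hn
    apply runEnds_injective
    · rw [hw.head? hn, hv.head? hn]
    · rintro (_ | _)
      · rw [h2, h4, h]
      · rw [h1, h3, h]
  · obtain ⟨hl, he, hd⟩ := hc
    obtain ⟨w, hw, ht, hf⟩ := exists_runEnds_eq true (c.map Prod.fst ++ [true])
      (c.map Prod.snd ++ [true]) (by simp) (endsTrue_append_true _) (endsTrue_append_true _)
      (by simp only [List.count_append]; exact (Nat.add_le_add_right he.ge _))
      (by simp only [List.count_append]; rw [← fstCount, he, sndCount]; omega)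
    have ct := length_runEnds true w
    have cf := length_runEnds false w
    rw [Bool.not_true] at hf
    refine ⟨w, isDyckWord_of_dominates hw ?_ ?_ fun i hi => ?_, ?_⟩
    · rw [← ct, ht]; simp [hl]
    · rw [← cf, hf]; simp [hl]
    · rw [ht, hf, take_map_append_true _ _ (by omega), take_map_append_true _ _ (by omega)]
      exact hd _ (List.take_prefix i c)
    · rw [columns, ht, hf, List.zip_append (by simp)]
      simp [List.zip_map']

lemma rStat_pos_iff {n : ℕ} {w : List Bool} (hw : IsDyckWord n w) {i : ℕ} (hi : i + 1 < n) :
    0 < rStat w (i + 1) ↔ ((columns w).map Prod.fst)[i]? = some true := by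
  obtain ⟨hl, ht, -⟩ := columns_spec hw (by omega)
  rw [rStat_eq_gapStat, gapStat_pos_iff true (by rwa [hw.2.1]), ht,
    List.getElem?_append_left (by simp; omega)]

lemma sStat_pos_iff {n : ℕ} {w : List Bool} (hw : IsDyckWord n w) {i : ℕ} (hi : i + 1 < n) :
    0 < sStat w (i + 1) ↔ ((columns w).map Prod.snd)[i]? = some true := by
  obtain ⟨hl, -, hf⟩ := columns_spec hw (by omega)
  rw [sStat_eq_gapStat, gapStat_pos_iff false (by rwa [hw.2.2.1]), hf,
    List.getElem?_append_left (by simp; omega)]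

lemma rStat_eq_one_iff {n : ℕ} {w : List Bool} (hw : IsDyckWord n w) {i : ℕ} (hi : i + 1 < n)
    (hpos : 0 < rStat w (i + 1)) :
    rStat w (i + 1) = 1 ↔
      follow ((columns w).map Prod.snd ++ [true]) (fstCount ((columns w).take i)) = true := by
  obtain ⟨hl, ht, hf⟩ := columns_spec hw (by omega)
  rw [rStat_eq_gapStat, gapStat_eq_one_iff true (by rwa [hw.2.1]) hpos, hw.head? (by omega),
    Bool.not_true, ht, hf, take_map_append_true _ _ (by omega)]
  rfl

lemma sStat_eq_one_iff {n : ℕ} {w : List Bool} (hw : IsDyckWord n w) {i : ℕ} (hi : i + 1 < n)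
    (hpos : 0 < sStat w (i + 1)) :
    sStat w (i + 1) = 1 ↔
      follow ((columns w).map Prod.fst ++ [true]) (sndCount ((columns w).take i) + 1) = true := by
  obtain ⟨hl, ht, hf⟩ := columns_spec hw (by omega)
  rw [sStat_eq_gapStat, gapStat_eq_one_iff false (by rwa [hw.2.2.1]) hpos, hw.head? (by omega),
    Bool.not_false, ht, hf, take_map_append_true _ _ (by omega)]
  rfl

lemma star_iff {n : ℕ} {w : List Bool} (hw : IsDyckWord n w) {i : ℕ} (hi : i + 1 < n) :
    (0 < rStat w (i + 1) ∧ 0 < sStat w (i + 1)) ↔ (columns w)[i]? = some (true, true) := by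
  rw [rStat_pos_iff hw hi, sStat_pos_iff hw hi, List.getElem?_map, List.getElem?_map]
  rcases (columns w)[i]? with _ | ⟨a, b⟩ <;> simp

lemma card_filter_Ico_eq_countP {α : Type*} (l : List α) (f : α → Bool) (p : ℕ → Prop)
    [DecidablePred p] (h : ∀ i, ∀ hi : i < l.length, p (i + 1) ↔ f l[i] = true) :
    ((Finset.Ico 1 (l.length + 1)).filter p).card = l.countP f := by
  induction l using List.reverseRecOn with
  | nil => simp
  | append_singleton l a ih =>
    have h1 := ih fun i hi => by
      rw [h i (by simp; omega), List.getElem_append_left hi]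
    have h2 := h l.length (by simp)
    simp only [List.getElem_append_right le_rfl, Nat.sub_self, List.getElem_singleton] at h2
    rw [List.length_append, List.length_singleton, ← Finset.insert_Ico_right_eq_Ico_add_one
      (by omega : 1 ≤ l.length + 1), Finset.filter_insert, List.countP_append, ← h1]
    by_cases hp : p (l.length + 1)
    · rw [if_pos hp, Finset.card_insert_of_notMem (by simp)]
      simp [h2.1 hp]
    · rw [if_neg hp]
      simp [mt h2.2 hp]

lemma countP_snd_eq_sndCount {P : List (Bool × Bool)} (hP : (true, true) ∉ P) :
    P.countP (fun a => !a.1 && a.2) = sndCount P := by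
  induction P with
  | nil => rfl
  | cons a P ih =>
    rcases a with ⟨_ | _, _ | _⟩ <;> simp_all [sndCount]

lemma countP_fst_eq_fstCount {P : List (Bool × Bool)} (hP : (true, true) ∉ P) :
    P.countP (fun a => a.1 && !a.2) = fstCount P := by
  induction P with
  | nil => rfl
  | cons a P ih =>
    rcases a with ⟨_ | _, _ | _⟩ <;> simp_all [fstCount]

lemma xStat_eq {n : ℕ} {w : List Bool} (hw : IsDyckWord n w) {P R : List (Bool × Bool)}
    (hc : columns w = P ++ R) (hn : 0 < n) :
    xStat w (P.length + 1) = P.countP (fun a => !a.1 && a.2) := by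
  have hl := (columns_spec hw hn).1
  rw [hc, List.length_append] at hl
  refine card_filter_Ico_eq_countP P _ _ fun i hi => ?_
  have hr := rStat_pos_iff hw (i := i) (by omega)
  have hs := sStat_pos_iff hw (i := i) (by omega)
  rw [hc, List.getElem?_map, List.getElem?_append_left hi, List.getElem?_eq_getElem hi] at hr hs
  rw [hs, ← not_iff_not.2 Nat.pos_iff_ne_zero |>.trans not_not, hr]
  simp

lemma yStat_eq {n : ℕ} {w : List Bool} (hw : IsDyckWord n w) {P R : List (Bool × Bool)}
    (hc : columns w = P ++ R) (hn : 0 < n) :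
    yStat w (P.length + 1) = P.countP (fun a => a.1 && !a.2) := by
  have hl := (columns_spec hw hn).1
  rw [hc, List.length_append] at hl
  refine card_filter_Ico_eq_countP P _ _ fun i hi => ?_
  have hr := rStat_pos_iff hw (i := i) (by omega)
  have hs := sStat_pos_iff hw (i := i) (by omega)
  rw [hc, List.getElem?_map, List.getElem?_append_left hi, List.getElem?_eq_getElem hi] at hr hs
  rw [hr, ← not_iff_not.2 Nat.pos_iff_ne_zero |>.trans not_not, hs]
  simp

lemma exists_eq_append_of_getElem? {α : Type*} {l : List α} {i : ℕ} {a : α}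
    (h : l[i]? = some a) : ∃ P R, l = P ++ a :: R ∧ P.length = i := by
  obtain ⟨hi, rfl⟩ := List.getElem?_eq_some_iff.1 h
  refine ⟨l.take i, l.drop (i + 1), ?_, by simp; omega⟩
  rw [← List.drop_eq_getElem_cons hi, List.take_append_drop]

lemma twoStars_iff {n : ℕ} {w : List Bool} (hw : IsDyckWord n w) (hn : 0 < n) (k₁ k₂ : ℕ) :
    twoStars n w k₁ k₂ ↔ ∃ P M Q, columns w = P ++ (true, true) :: (M ++ (true, true) :: Q) ∧
      (true, true) ∉ P ∧ (true, true) ∉ M ∧ (true, true) ∉ Q ∧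
      k₁ = P.length + 1 ∧ k₂ = P.length + M.length + 2 := by
  have hl := (columns_spec hw hn).1
  constructor
  · rintro ⟨h1, h2, hlt, hs1, hs2, hs⟩
    rw [Finset.mem_Icc] at h1 h2
    obtain ⟨i, rfl⟩ := Nat.exists_eq_add_of_le' h1.1
    obtain ⟨j, rfl⟩ := Nat.exists_eq_add_of_le' h2.1
    rw [star_iff hw (by omega)] at hs1 hs2
    have hs' : ∀ k, (columns w)[k]? = some (true, true) → k = i ∨ k = j := by
      intro k hk
      have hkl := (List.getElem?_eq_some_iff.1 hk).1
      have := hs (k + 1) (by rw [Finset.mem_Icc]; omega) ((star_iff hw (by omega)).2 hk)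
      omega
    obtain ⟨P, R, hc, rfl⟩ := exists_eq_append_of_getElem? hs1
    have hR : R[j - P.length - 1]? = some (true, true) := by
      rw [hc, List.getElem?_append_right (by omega), List.getElem?_cons,
        if_neg (by omega)] at hs2
      exact hs2
    obtain ⟨M, Q, rfl, hM⟩ := exists_eq_append_of_getElem? hR
    refine ⟨P, M, Q, hc, fun h => ?_, fun h => ?_, fun h => ?_, rfl, by omega⟩
    · obtain ⟨k, hk⟩ := List.mem_iff_getElem?.1 h
      have hkl := (List.getElem?_eq_some_iff.1 hk).1
      have := hs' k (by rw [hc, List.getElem?_append_left hkl, hk])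
      omega
    · obtain ⟨k, hk⟩ := List.mem_iff_getElem?.1 h
      have hkl := (List.getElem?_eq_some_iff.1 hk).1
      have := hs' (P.length + 1 + k) (by
        rw [hc, List.getElem?_append_right (by omega), List.getElem?_cons, if_neg (by omega),
          List.getElem?_append_left (by omega), ← hk]
        congr 1; omega)
      omega
    · obtain ⟨k, hk⟩ := List.mem_iff_getElem?.1 h
      have := hs' (P.length + 1 + M.length + 1 + k) (by
        rw [hc, List.getElem?_append_right (by omega), List.getElem?_cons, if_neg (by omega),
          List.getElem?_append_right (by omega), List.getElem?_cons, if_neg (by omega), ← hk]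
        congr 1; omega)
      omega
  · rintro ⟨P, M, Q, hc, hP, hM, hQ, rfl, rfl⟩
    have hl' := hl
    rw [hc] at hl'
    simp only [List.length_append, List.length_cons] at hl'
    refine ⟨by rw [Finset.mem_Icc]; omega, by rw [Finset.mem_Icc]; omega, by omega, ?_, ?_, ?_⟩
    · rw [star_iff hw (by omega), hc]
      simp
    · rw [star_iff hw (by omega), hc, List.getElem?_append_right (by omega), List.getElem?_cons,
        if_neg (by omega), List.getElem?_append_right (by omega), List.getElem?_cons,
        if_pos (by omega)]
    · intro k hk
      rw [Finset.mem_Icc] at hk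
      obtain ⟨k, rfl⟩ := Nat.exists_eq_add_of_le' hk.1
      rw [star_iff hw (by omega), hc]
      intro h
      by_contra hne
      rcases lt_or_gt_of_ne (show k ≠ P.length by omega) with h1 | h1
      · rw [List.getElem?_append_left h1] at h
        exact hP (List.mem_of_getElem? h)
      · rw [List.getElem?_append_right (by omega), List.getElem?_cons, if_neg (by omega)] at h
        rcases lt_or_gt_of_ne (show k - P.length - 1 ≠ M.length by omega) with h2 | h2
        · rw [List.getElem?_append_left h2] at h
          exact hM (List.mem_of_getElem? h)
        · rw [List.getElem?_append_right (by omega), List.getElem?_cons, if_neg (by omega)] at h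
          exact hQ (List.mem_of_getElem? h)

lemma two_le_choose_add {r s : ℕ} (hr : 0 < r) (hs : 0 < s) : 2 ≤ (r + s).choose r := by
  obtain ⟨r, rfl⟩ := Nat.exists_eq_succ_of_ne_zero hr.ne'
  obtain ⟨s, rfl⟩ := Nat.exists_eq_succ_of_ne_zero hs.ne'
  have h : r.succ + s.succ = (r + s + 1) + 1 := by omega
  rw [h, Nat.choose_succ_succ]
  have h1 : 0 < (r + s + 1).choose r := Nat.choose_pos (by omega)
  have h2 : 0 < (r + s + 1).choose r.succ := Nat.choose_pos (by omega)
  omega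

lemma choose_add_eq_two_iff {r s : ℕ} (hr : 0 < r) (hs : 0 < s) :
    (r + s).choose r = 2 ↔ r = 1 ∧ s = 1 := by
  refine ⟨fun h => ?_, by rintro ⟨rfl, rfl⟩; rfl⟩
  obtain ⟨r, rfl⟩ := Nat.exists_eq_succ_of_ne_zero hr.ne'
  obtain ⟨s, rfl⟩ := Nat.exists_eq_succ_of_ne_zero hs.ne'
  have h' : r.succ + s.succ = (r + s + 1) + 1 := by omega
  rw [h', Nat.choose_succ_succ] at h
  have h1 : 0 < (r + s + 1).choose r := Nat.choose_pos (by omega)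
  have h2 : 0 < (r + s + 1).choose r.succ := Nat.choose_pos (by omega)
  have h3 : r = 0 := by
    by_contra hr0
    have := two_le_choose_add (r := r) (s := s + 1) (by omega) (by omega)
    rw [← add_assoc] at this
    omega
  have h4 : s = 0 := by
    by_contra hs0
    have := two_le_choose_add (r := r + 1) (s := s) (by omega) (by omega)
    rw [show r + 1 + s = r + s + 1 by omega] at this
    simp only [Nat.succ_eq_add_one] at h h2
    omega
  omega

lemma LStat_eq_four_iff {n : ℕ} {w : List Bool} {k₁ k₂ : ℕ} (h : twoStars n w k₁ k₂) :
    LStat n w = 4 ↔ (rStat w k₁ = 1 ∧ sStat w k₁ = 1) ∧ (rStat w k₂ = 1 ∧ sStat w k₂ = 1) := by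
  obtain ⟨h1, h2, hlt, hs1, hs2, hs⟩ := h
  rw [← choose_add_eq_two_iff hs1.1 hs1.2, ← choose_add_eq_two_iff hs2.1 hs2.2, LStat,
    Finset.prod_eq_mul k₁ k₂ hlt.ne ?_ (fun h => absurd h1 h) (fun h => absurd h2 h)]
  · have c1 := two_le_choose_add hs1.1 hs1.2
    have c2 := two_le_choose_add hs2.1 hs2.2
    generalize (rStat w k₁ + sStat w k₁).choose (rStat w k₁) = a at *
    generalize (rStat w k₂ + sStat w k₂).choose (rStat w k₂) = b at *
    constructor
    · intro hab
      constructor <;> nlinarith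
    · rintro ⟨rfl, rfl⟩; rfl
  · rintro j hj ⟨hj1, hj2⟩
    rcases Nat.eq_zero_or_pos (rStat w j) with hr | hr
    · simp [hr]
    · rcases Nat.eq_zero_or_pos (sStat w j) with hs0 | hs0
      · simp [hs0]
      · rcases hs j hj ⟨hr, hs0⟩ with rfl | rfl
        · exact absurd rfl hj1
        · exact absurd rfl hj2

/-- The column words of the Dyck paths in `D̂` with `x₁ = y₂`. -/
def IsHatColumnWord (c : List (Bool × Bool)) : Prop :=
  ∃ P M Q, c = P ++ (true, true) :: (M ++ (true, true) :: Q) ∧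
    (true, true) ∉ P ∧ (true, true) ∉ M ∧ (true, true) ∉ Q ∧
    sndCount P = fstCount P + fstCount M ∧
    follow (c.map Prod.snd ++ [true]) (fstCount P) = true ∧
    follow (c.map Prod.fst ++ [true]) (sndCount P + 1) = true ∧
    follow (c.map Prod.snd ++ [true]) (fstCount P + fstCount M + 1) = true ∧
    follow (c.map Prod.fst ++ [true]) (sndCount P + sndCount M + 2) = true

lemma isHatColumnWord_columns_iff {n : ℕ} {w : List Bool} (hw : IsDyckWord n w) (hn : 0 < n) :
    (LStat n w = 4 ∧ ∃ k₁ k₂, twoStars n w k₁ k₂ ∧ xStat w k₁ = yStat w k₂) ↔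
      IsHatColumnWord (columns w) := by
  have key : ∀ P M Q, columns w = P ++ (true, true) :: (M ++ (true, true) :: Q) →
      (true, true) ∉ P → (true, true) ∉ M → (true, true) ∉ Q →
      twoStars n w (P.length + 1) (P.length + M.length + 2) ∧
      ((LStat n w = 4 ∧ xStat w (P.length + 1) = yStat w (P.length + M.length + 2)) ↔
      sndCount P = fstCount P + fstCount M ∧
      follow ((columns w).map Prod.snd ++ [true]) (fstCount P) = true ∧
      follow ((columns w).map Prod.fst ++ [true]) (sndCount P + 1) = true ∧
      follow ((columns w).map Prod.snd ++ [true]) (fstCount P + fstCount M + 1) = true ∧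
      follow ((columns w).map Prod.fst ++ [true]) (sndCount P + sndCount M + 2) = true) := by
    intro P M Q hc hP hM hQ
    have hts := (twoStars_iff hw hn _ _).2 ⟨P, M, Q, hc, hP, hM, hQ, rfl, rfl⟩
    refine ⟨hts, ?_⟩
    have hl := (columns_spec hw hn).1
    rw [hc] at hl
    simp only [List.length_append, List.length_cons] at hl
    have hc' : columns w = (P ++ (true, true) :: M) ++ (true, true) :: Q := by simp [hc]
    have hlen : (P ++ (true, true) :: M).length = P.length + M.length + 1 := by
      simp; omega
    have hx := xStat_eq hw hc hn
    have hy := yStat_eq hw hc' hn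
    rw [hlen] at hy
    have ht1 : (columns w).take P.length = P := by rw [hc, List.take_left]
    have ht2 : (columns w).take (P.length + M.length + 1) = P ++ (true, true) :: M := by
      rw [hc', List.take_left' hlen]
    rw [LStat_eq_four_iff hts, hx, hy, rStat_eq_one_iff hw (by omega) hts.2.2.2.1.1,
      sStat_eq_one_iff hw (by omega) hts.2.2.2.1.2,
      rStat_eq_one_iff hw (by omega) hts.2.2.2.2.1.1,
      sStat_eq_one_iff hw (by omega) hts.2.2.2.2.1.2, ht1, ht2, List.countP_append,
      List.countP_cons, countP_snd_eq_sndCount hP, countP_fst_eq_fstCount hP,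
      countP_fst_eq_fstCount hM]
    have e1 : fstCount (P ++ (true, true) :: M) = fstCount P + fstCount M + 1 := by
      simp [fstCount, add_assoc]
    have e2 : sndCount (P ++ (true, true) :: M) + 1 = sndCount P + sndCount M + 2 := by
      simp [sndCount, add_assoc]
    rw [e1, e2]
    simp
    tauto
  constructor
  · rintro ⟨hL, k₁, k₂, hts, hxy⟩
    obtain ⟨P, M, Q, hc, hP, hM, hQ, rfl, rfl⟩ := (twoStars_iff hw hn _ _).1 hts
    exact ⟨P, M, Q, hc, hP, hM, hQ, (key P M Q hc hP hM hQ).2.1 ⟨hL, hxy⟩⟩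
  · rintro ⟨P, M, Q, hc, hP, hM, hQ, h⟩
    obtain ⟨hts, hiff⟩ := key P M Q hc hP hM hQ
    have := hiff.2 h
    exact ⟨this.1, _, _, hts, this.2⟩

lemma ncard_dyckHat {n : ℕ} (hn : 0 < n) :
    {w | IsDyckWord n w ∧ LStat n w = 4 ∧ ∃ k₁ k₂, twoStars n w k₁ k₂ ∧
      xStat w k₁ = yStat w k₂}.ncard = {c | IsColumnWord n c ∧ IsHatColumnWord c}.ncard := by
  have h : columns '' {w | IsDyckWord n w ∧ LStat n w = 4 ∧ ∃ k₁ k₂, twoStars n w k₁ k₂ ∧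
      xStat w k₁ = yStat w k₂} = {c | IsColumnWord n c ∧ IsHatColumnWord c} := by
    ext c
    constructor
    · rintro ⟨w, ⟨hw, h⟩, rfl⟩
      exact ⟨isColumnWord_columns hw hn, (isHatColumnWord_columns_iff hw hn).1 h⟩
    · rintro ⟨hc, h⟩
      obtain ⟨w, hw, rfl⟩ := (columns_bijOn hn).surjOn hc
      exact ⟨w, ⟨hw, (isHatColumnWord_columns_iff hw hn).2 h⟩, rfl⟩
  rw [← h, Set.InjOn.ncard_image ((columns_bijOn hn).injOn.mono fun w hw => hw.1)]

/-- The column encoding a Motzkin step. -/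
def stepColumn : Option Bool → Bool × Bool
  | none => (false, false)
  | some true => (false, true)
  | some false => (true, false)

lemma stepColumn_injective : Function.Injective stepColumn := by
  rintro (_ | _ | _) (_ | _ | _) h <;> simp_all [stepColumn]

lemma stepColumn_ne (s : Option Bool) : stepColumn s ≠ (true, true) := by
  rcases s with _ | _ | _ <;> simp [stepColumn]

lemma star_notMem_map_stepColumn (l : List (Option Bool)) : (true, true) ∉ l.map stepColumn := by
  simp [stepColumn_ne]

lemma exists_map_stepColumn_eq {P : List (Bool × Bool)} (hP : (true, true) ∉ P) :
    ∃ l : List (Option Bool), l.map stepColumn = P := by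
  have h : ∀ a ∈ P, a ∈ Set.range stepColumn := by
    rintro ⟨a, b⟩ h
    match a, b with
    | false, false => exact ⟨none, rfl⟩
    | false, true => exact ⟨some true, rfl⟩
    | true, false => exact ⟨some false, rfl⟩
    | true, true => exact absurd h hP
  have h' : P ∈ Set.range (List.map stepColumn) := by rwa [Set.range_list_map]
  exact h'

lemma fstCount_map_stepColumn (l : List (Option Bool)) :
    fstCount (l.map stepColumn) = l.count (some false) := by
  induction l with
  | nil => rfl
  | cons s l ih => rcases s with _ | _ | _ <;> simp_all [fstCount, stepColumn]

lemma sndCount_map_stepColumn (l : List (Option Bool)) :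
    sndCount (l.map stepColumn) = l.count (some true) := by
  induction l with
  | nil => rfl
  | cons s l ih => rcases s with _ | _ | _ <;> simp_all [sndCount, stepColumn]

lemma fstCount_append (c d : List (Bool × Bool)) : fstCount (c ++ d) = fstCount c + fstCount d := by
  simp [fstCount]

lemma sndCount_append (c d : List (Bool × Bool)) : sndCount (c ++ d) = sndCount c + sndCount d := by
  simp [sndCount]

lemma fstCount_star (c : List (Bool × Bool)) : fstCount ((true, true) :: c) = fstCount c + 1 := by
  simp [fstCount]

lemma sndCount_star (c : List (Bool × Bool)) : sndCount ((true, true) :: c) = sndCount c + 1 := by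
  simp [sndCount]

lemma prefix_append_iff {α : Type*} {p a b : List α} :
    p <+: a ++ b ↔ p <+: a ∨ ∃ q, q <+: b ∧ p = a ++ q := by
  constructor
  · intro hp
    rcases le_total p.length a.length with hl | hl
    · exact Or.inl (List.prefix_of_prefix_length_le hp (List.prefix_append a b) hl)
    · obtain ⟨q, rfl⟩ := List.prefix_of_prefix_length_le (List.prefix_append a b) hp hl
      exact Or.inr ⟨q, by rwa [List.prefix_append_right_inj] at hp, rfl⟩
  · rintro (h | ⟨q, h, rfl⟩)
    · exact h.trans (List.prefix_append a b)
    · rwa [List.prefix_append_right_inj]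

lemma forall_prefix_append_iff {α : Type*} {φ : List α → Prop} {a b : List α} :
    (∀ p, p <+: a ++ b → φ p) ↔ (∀ p, p <+: a → φ p) ∧ ∀ p, p <+: b → φ (a ++ p) := by
  simp only [prefix_append_iff]
  constructor
  · exact fun h => ⟨fun p hp => h p (.inl hp), fun p hp => h _ (.inr ⟨p, hp, rfl⟩)⟩
  · rintro ⟨h1, h2⟩ p (hp | ⟨q, hq, rfl⟩)
    exacts [h1 p hp, h2 q hq]

/-- Motzkin paths that may end at any height. -/
def IsMotzkinPrefix (l : List (Option Bool)) : Prop :=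
  ∀ p, p <+: l → p.count (some false) ≤ p.count (some true)

/-- Motzkin prefixes ending at height `a + 1` in which, with `d` the number of down steps,
the `d`-th up step (the beginning of the path if `d = 0`) is followed by an up step. -/
def IsSpecialPrefix (a : ℕ) (l : List (Option Bool)) : Prop :=
  IsMotzkinPrefix l ∧ l.count (some true) = l.count (some false) + a + 1 ∧
    follow ((l.map stepColumn).map Prod.snd) (l.count (some false)) = true

/-- The path read backwards. -/
def flipRev (l : List (Option Bool)) : List (Option Bool) := (l.map (Option.map not)).reverse

lemma flipRev_flipRev (l : List (Option Bool)) : flipRev (flipRev l) = l := by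
  simp [flipRev, Function.comp_def]

lemma length_flipRev (l : List (Option Bool)) : (flipRev l).length = l.length := by
  simp [flipRev]

lemma count_flipRev (l : List (Option Bool)) (b : Bool) :
    (flipRev l).count (some b) = l.count (some !b) := by
  rw [flipRev, List.count_reverse]
  induction l with
  | nil => rfl
  | cons s l ih => rcases s with _ | _ | _ <;> cases b <;> simp_all

lemma map_snd_flipRev (l : List (Option Bool)) :
    ((flipRev l).map stepColumn).map Prod.snd = ((l.map stepColumn).map Prod.fst).reverse := by
  induction l with
  | nil => rfl
  | cons s l ih =>
    have : flipRev (s :: l) = flipRev l ++ [Option.map not s] := by simp [flipRev]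
    rw [this]
    rcases s with _ | _ | _ <;> simp_all [stepColumn]

lemma isMotzkinPrefix_flipRev_iff (l : List (Option Bool)) :
    IsMotzkinPrefix (flipRev l) ↔ ∀ p, p <+: l →
      l.count (some true) + p.count (some false) ≤ l.count (some false) + p.count (some true) := by
  constructor
  · rintro h p ⟨s, rfl⟩
    have := h (flipRev s) ⟨flipRev p, by simp [flipRev]⟩
    rw [count_flipRev, count_flipRev] at this
    simp at this ⊢
    omega
  · rintro h p ⟨s, hs⟩
    have hl : l = flipRev s ++ flipRev p := by
      rw [← flipRev_flipRev l, ← hs]; simp [flipRev]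
    have := h (flipRev s) ⟨flipRev p, hl.symm⟩
    rw [hl] at this
    simp only [List.count_append, count_flipRev, Bool.not_true, Bool.not_false] at this
    omega

lemma follow_reverse_append (l : List Bool) {m s : ℕ} (hm : 0 < m) (hl : l.count true = m + s) :
    follow (l.reverse ++ [true]) m = true ↔ follow l s = true := by
  obtain ⟨p, v, rfl, rfl⟩ := exists_eq_append_cons_of_lt_count true (w := l) (i := s) (by omega)
  rw [follow_append_true]
  have h1 : (p ++ true :: v).reverse ++ [true] = (v.reverse ++ [true]) ++ (p.reverse ++ [true]) := by
    simp
  have h2 : (v.reverse ++ [true]).count true = m := by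
    simp at hl ⊢; omega
  have h3 := follow_append_of_endsTrue (endsTrue_append_true v.reverse) (p.reverse ++ [true]) 0
  rw [h1, ← h2, ← Nat.add_zero (List.count true _), h3]
  rcases List.eq_nil_or_concat p with rfl | ⟨p, b, rfl⟩
  · simp [follow, EndsTrue]
  · cases b <;> simp [follow, EndsTrue]

lemma follow_append_true_cons_zero_iff (l : List (Option Bool)) (r : List Bool) :
    follow ((l.map stepColumn).map Prod.snd ++ true :: r) 0 = true ↔
      l = [] ∨ ∃ l', l = some true :: l' := by
  rcases l with _ | ⟨_ | _ | _, l⟩ <;> simp [follow, stepColumn]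

lemma follow_fst_append_true_cons_zero_iff (l : List (Option Bool)) (r : List Bool) :
    follow ((l.map stepColumn).map Prod.fst ++ true :: r) 0 = true ↔
      l = [] ∨ ∃ l', l = some false :: l' := by
  rcases l with _ | ⟨_ | _ | _, l⟩ <;> simp [follow, stepColumn]

lemma endsTrue_map_fst_iff (l : List (Option Bool)) :
    EndsTrue ((l.map stepColumn).map Prod.fst) ↔ l = [] ∨ ∃ l', l = l' ++ [some false] := by
  rcases List.eq_nil_or_concat l with rfl | ⟨l, _ | _ | _, rfl⟩ <;> simp [EndsTrue, stepColumn]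

lemma endsTrue_map_snd_iff (l : List (Option Bool)) :
    EndsTrue ((l.map stepColumn).map Prod.snd) ↔ l = [] ∨ ∃ l', l = l' ++ [some true] := by
  rcases List.eq_nil_or_concat l with rfl | ⟨l, _ | _ | _, rfl⟩ <;> simp [EndsTrue, stepColumn]

/-- The column word with two stars separating three Motzkin words. -/
def starWord (P M Q : List (Option Bool)) : List (Bool × Bool) :=
  P.map stepColumn ++ (true, true) :: (M.map stepColumn ++ (true, true) :: Q.map stepColumn)

lemma map_snd_starWord (P M Q : List (Option Bool)) :
    (starWord P M Q).map Prod.snd ++ [true] = (P.map stepColumn).map Prod.snd ++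
      true :: ((M.map stepColumn).map Prod.snd ++
        true :: ((Q.map stepColumn).map Prod.snd ++ [true])) := by
  simp [starWord]

lemma map_fst_starWord (P M Q : List (Option Bool)) :
    (starWord P M Q).map Prod.fst ++ [true] = (P.map stepColumn).map Prod.fst ++
      true :: ((M.map stepColumn).map Prod.fst ++
        true :: ((Q.map stepColumn).map Prod.fst ++ [true])) := by
  simp [starWord]

/-- The conditions imposed on the three Motzkin words of a column word by `D̂` and `x₁ = y₂`. -/
def IsHatTriple (P M Q : List (Option Bool)) : Prop :=
  P.count (some true) = P.count (some false) + M.count (some false) ∧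
    follow ((starWord P M Q).map Prod.snd ++ [true]) (P.count (some false)) = true ∧
    (M = [] ∨ ∃ l, M = l ++ [some false]) ∧ (M = [] ∨ ∃ l, M = some true :: l) ∧
    follow ((Q.map stepColumn).map Prod.fst ++ [true]) (M.count (some true)) = true

lemma isHatColumnWord_iff (c : List (Bool × Bool)) :
    IsHatColumnWord c ↔ ∃ P M Q, c = starWord P M Q ∧ IsHatTriple P M Q := by
  have key : ∀ P M Q : List (Option Bool),
      P.count (some true) = P.count (some false) + M.count (some false) →
      (follow ((starWord P M Q).map Prod.fst ++ [true]) (P.count (some true) + 1) = true ↔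
        M = [] ∨ ∃ l, M = l ++ [some false]) ∧
      (follow ((starWord P M Q).map Prod.snd ++ [true])
        (P.count (some false) + M.count (some false) + 1) = true ↔
          M = [] ∨ ∃ l, M = some true :: l) ∧
      follow ((starWord P M Q).map Prod.fst ++ [true])
        (P.count (some true) + M.count (some true) + 2) =
          follow ((Q.map stepColumn).map Prod.fst ++ [true]) (M.count (some true)) := by
    intro P M Q h
    have f1 := fstCount_map_stepColumn P
    have f2 := fstCount_map_stepColumn M
    have s1 := sndCount_map_stepColumn P
    rw [fstCount] at f1 f2
    rw [sndCount] at s1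
    rw [map_fst_starWord, map_snd_starWord]
    refine ⟨?_, ?_, ?_⟩
    · rw [← endsTrue_map_fst_iff, ← endsTrue_true_cons]
      have h1 : EndsTrue (true :: (M.map stepColumn).map Prod.fst) ↔
          EndsTrue ((P.map stepColumn).map Prod.fst ++
            true :: (M.map stepColumn).map Prod.fst) := by
        simp only [EndsTrue, List.getLast?_append, List.getLast?_cons, Option.some_or]
      rw [h1, ← follow_append_true _ (((Q.map stepColumn).map Prod.fst ++ [true]))]
      have h2 : ((P.map stepColumn).map Prod.fst ++
            true :: (M.map stepColumn).map Prod.fst).count true = P.count (some true) + 1 := by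
        rw [List.count_append, List.count_cons_self, f1, f2, h]; omega
      rw [h2, List.append_assoc, List.cons_append]
    · rw [← follow_append_true_cons_zero_iff]
      have h3 := follow_append_of_endsTrue
        (endsTrue_append_true ((P.map stepColumn).map Prod.snd))
        ((M.map stepColumn).map Prod.snd ++
          true :: ((Q.map stepColumn).map Prod.snd ++ [true])) 0
      rw [← h3, List.count_append, s1, ← h]
      simp
    · have h3 := follow_append_of_endsTrue
        (endsTrue_append_true ((P.map stepColumn).map Prod.fst ++
          true :: (M.map stepColumn).map Prod.fst))
        ((Q.map stepColumn).map Prod.fst ++ [true]) (M.count (some true))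
      rw [← h3]
      congr 1
      · simp
      · rw [List.count_append, List.count_append, List.count_cons_self, f1, f2, h]
        simp; omega
  constructor
  · rintro ⟨P, M, Q, hc, hP, hM, hQ, h, h1, h2, h3, h4⟩
    obtain ⟨P, rfl⟩ := exists_map_stepColumn_eq hP
    obtain ⟨M, rfl⟩ := exists_map_stepColumn_eq hM
    obtain ⟨Q, rfl⟩ := exists_map_stepColumn_eq hQ
    simp only [fstCount_map_stepColumn, sndCount_map_stepColumn] at h h1 h2 h3 h4
    rw [← starWord] at hc
    subst hc
    obtain ⟨k1, k2, k3⟩ := key P M Q h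
    exact ⟨P, M, Q, rfl, h, h1, k1.1 h2, k2.1 h3, k3 ▸ h4⟩
  · rintro ⟨P, M, Q, rfl, h, h1, h2, h3, h4⟩
    obtain ⟨k1, k2, k3⟩ := key P M Q h
    refine ⟨P.map stepColumn, M.map stepColumn, Q.map stepColumn, rfl,
      star_notMem_map_stepColumn _, star_notMem_map_stepColumn _, star_notMem_map_stepColumn _, ?_⟩
    simp only [fstCount_map_stepColumn, sndCount_map_stepColumn]
    exact ⟨h, h1, k1.2 h2, k2.2 h3, k3.trans h4⟩

lemma forall_prefix_map_stepColumn_iff (A : List (Bool × Bool)) (l : List (Option Bool)) :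
    (∀ p, p <+: l.map stepColumn → fstCount (A ++ p) ≤ sndCount (A ++ p)) ↔
      ∀ p, p <+: l →
        fstCount A + p.count (some false) ≤ sndCount A + p.count (some true) := by
  constructor
  · intro h p hp
    have := h (p.map stepColumn) (hp.map _)
    rwa [fstCount_append, sndCount_append, fstCount_map_stepColumn,
      sndCount_map_stepColumn] at this
  · intro h p hp
    obtain ⟨q, hq, rfl⟩ := List.prefix_map_iff.1 hp
    rw [fstCount_append, sndCount_append, fstCount_map_stepColumn, sndCount_map_stepColumn]
    exact h q hq

lemma isColumnWord_starWord_iff {P M Q : List (Option Bool)} {n : ℕ}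
    (h : P.count (some true) = P.count (some false) + M.count (some false)) :
    IsColumnWord n (starWord P M Q) ↔ P.length + M.length + Q.length + 3 = n ∧
      Q.count (some false) = M.count (some true) + Q.count (some true) ∧
      IsMotzkinPrefix P ∧ IsMotzkinPrefix (flipRev Q) := by
  have hw : starWord P M Q = P.map stepColumn ++ ([(true, true)] ++ (M.map stepColumn ++
      ([(true, true)] ++ Q.map stepColumn))) := by simp [starWord]
  have hlen : (starWord P M Q).length = P.length + M.length + Q.length + 2 := by
    simp [starWord]; omega
  have hf : fstCount (starWord P M Q) =
      P.count (some false) + M.count (some false) + Q.count (some false) + 2 := by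
    rw [starWord, fstCount_append, fstCount_star, fstCount_append, fstCount_star]
    simp only [fstCount_map_stepColumn]; omega
  have hs : sndCount (starWord P M Q) =
      P.count (some true) + M.count (some true) + Q.count (some true) + 2 := by
    rw [starWord, sndCount_append, sndCount_star, sndCount_append, sndCount_star]
    simp only [sndCount_map_stepColumn]; omega
  have hPre := forall_prefix_map_stepColumn_iff [] P
  simp only [List.nil_append] at hPre
  rw [IsColumnWord, hlen, hf, hs, isMotzkinPrefix_flipRev_iff, hw, forall_prefix_append_iff, hPre]
  have e1 : fstCount ([] : List (Bool × Bool)) = 0 := rfl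
  have e2 : sndCount ([] : List (Bool × Bool)) = 0 := rfl
  simp only [e1, e2, zero_add]
  constructor
  · rintro ⟨hl, hc, hP, hR⟩
    have hd : Q.count (some false) = M.count (some true) + Q.count (some true) := by omega
    refine ⟨by omega, hd, hP, fun p hp => ?_⟩
    have := hR ([(true, true)] ++ (M.map stepColumn ++ ([(true, true)] ++ p.map stepColumn)))
      (by simpa using hp.map _)
    simp only [fstCount_append, sndCount_append, fstCount_map_stepColumn,
      sndCount_map_stepColumn, fstCount_star, sndCount_star, e1, e2] at this
    omega
  · rintro ⟨hl, hd, hP, hQ⟩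
    refine ⟨by omega, by omega, hP, ?_⟩
    have hPP := hP P List.prefix_rfl
    have hnil := hQ [] List.nil_prefix
    simp only [List.count_nil] at hnil
    intro p hp
    rcases p with _ | ⟨a, p⟩
    · simpa [fstCount_map_stepColumn, sndCount_map_stepColumn] using hPP
    obtain ⟨rfl, hp'⟩ := List.cons_prefix_cons.1 hp
    rcases prefix_append_iff (a := M.map stepColumn).1 hp' with hp | ⟨q, hq, rfl⟩
    · obtain ⟨r, hr, rfl⟩ := List.prefix_map_iff.1 hp
      have := hr.sublist.count_le (some false)
      simp only [fstCount_append, sndCount_append, fstCount_map_stepColumn,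
        sndCount_map_stepColumn, fstCount_star, sndCount_star]
      omega
    rcases q with _ | ⟨a, q⟩
    · simp only [fstCount_append, sndCount_append, fstCount_map_stepColumn,
        sndCount_map_stepColumn, fstCount_star, sndCount_star, e1, e2]
      omega
    obtain ⟨rfl, hq'⟩ := List.cons_prefix_cons.1 hq
    obtain ⟨r, hr, rfl⟩ := List.prefix_map_iff.1 hq'
    have := hQ r hr
    simp only [fstCount_append, sndCount_append, fstCount_map_stepColumn,
      sndCount_map_stepColumn, fstCount_star, sndCount_star]
    omega

lemma IsHatTriple.eq_nil {P Q : List (Option Bool)} (h : IsHatTriple P [] Q)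
    (hP : IsMotzkinPrefix P) (hQ : IsMotzkinPrefix (flipRev Q))
    (hd : Q.count (some false) = Q.count (some true)) : P = [] ∧ Q = [] := by
  obtain ⟨h0, h1, -, -, h2⟩ := h
  have hc := sndCount_map_stepColumn P
  rw [sndCount] at hc
  simp only [List.count_nil, add_zero] at h0 h2
  rw [map_snd_starWord, ← h0, ← hc, follow_append_true, endsTrue_map_snd_iff] at h1
  rw [follow_fst_append_true_cons_zero_iff] at h2
  constructor
  · refine h1.resolve_right ?_
    rintro ⟨l, rfl⟩
    have := hP l (List.prefix_append _ _)
    simp at h0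
    omega
  · refine h2.resolve_right ?_
    rintro ⟨l, rfl⟩
    have := (isMotzkinPrefix_flipRev_iff _).1 hQ [some false] ⟨l, rfl⟩
    simp at this hd
    omega

lemma IsHatTriple.eq_nil_or_exists {P M Q : List (Option Bool)} (h : IsHatTriple P M Q) :
    M = [] ∨ ∃ w, M = some true :: (w ++ [some false]) := by
  obtain ⟨-, -, h1, h2, -⟩ := h
  rcases h2 with h2 | ⟨l, rfl⟩
  · exact .inl h2
  · obtain ⟨l', h1⟩ := h1.resolve_left (by simp)
    rcases l' with _ | ⟨a, w⟩
    · simp at h1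
    · simp at h1
      exact .inr ⟨w, by rw [h1.2]⟩

lemma isHatTriple_iff {P w Q : List (Option Bool)} {n : ℕ} :
    (IsColumnWord n (starWord P (some true :: (w ++ [some false])) Q) ∧
      IsHatTriple P (some true :: (w ++ [some false])) Q) ↔
    P.length + w.length + Q.length + 5 = n ∧ IsSpecialPrefix (w.count (some false)) P ∧
      IsSpecialPrefix (w.count (some true)) (flipRev Q) := by
  set M := some true :: (w ++ [some false]) with hM
  have hMf : M.count (some false) = w.count (some false) + 1 := by simp [hM]
  have hMt : M.count (some true) = w.count (some true) + 1 := by simp [hM]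
  have hMl : M.length = w.length + 2 := by simp [hM]
  have hP1 : P.count (some true) = P.count (some false) + w.count (some false) + 1 →
      (follow ((starWord P M Q).map Prod.snd ++ [true]) (P.count (some false)) = true ↔
      follow ((P.map stepColumn).map Prod.snd) (P.count (some false)) = true) := by
    intro h
    have hc := sndCount_map_stepColumn P
    rw [sndCount] at hc
    rw [map_snd_starWord, follow_append_of_lt _ _ (by omega)]
  have hQ1 : Q.count (some false) = Q.count (some true) + w.count (some true) + 1 →
      (follow ((Q.map stepColumn).map Prod.fst ++ [true]) (M.count (some true)) = true ↔
      follow (((flipRev Q).map stepColumn).map Prod.snd) (Q.count (some true)) = true) := by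
    intro h
    have hc := sndCount_map_stepColumn (flipRev Q)
    rw [sndCount, count_flipRev, Bool.not_true] at hc
    rw [← follow_reverse_append (m := M.count (some true))
      (((flipRev Q).map stepColumn).map Prod.snd) (by omega) (by omega), map_snd_flipRev, List.reverse_reverse]
  have hMn : (M = [] ∨ ∃ l, M = l ++ [some false]) ∧ (M = [] ∨ ∃ l, M = some true :: l) :=
    ⟨.inr ⟨some true :: w, by simp [hM]⟩, .inr ⟨_, hM⟩⟩
  simp only [IsSpecialPrefix, count_flipRev, Bool.not_true, Bool.not_false]
  constructor
  · rintro ⟨hc, h0, h1, -, -, h2⟩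
    obtain ⟨hl, hd, hP, hQ⟩ := (isColumnWord_starWord_iff h0).1 hc
    have h0' : P.count (some true) = P.count (some false) + w.count (some false) + 1 := by omega
    have hd' : Q.count (some false) = Q.count (some true) + w.count (some true) + 1 := by omega
    exact ⟨by omega, ⟨hP, h0', (hP1 h0').1 h1⟩, hQ, hd', (hQ1 hd').1 h2⟩
  · rintro ⟨hl, ⟨hP, h0, h1⟩, hQ, hd, h2⟩
    have h0' : P.count (some true) = P.count (some false) + M.count (some false) := by omega
    exact ⟨(isColumnWord_starWord_iff h0').2 ⟨by omega, by omega, hP, hQ⟩, h0', (hP1 h0).2 h1,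
      hMn.1, hMn.2, (hQ1 hd).2 h2⟩

lemma append_cons_inj_of_notMem {α : Type*} {a : α} {l₁ l₂ x y : List α} (h₁ : a ∉ l₁)
    (h₂ : a ∉ l₂) (h : l₁ ++ a :: x = l₂ ++ a :: y) : l₁ = l₂ ∧ x = y := by
  induction l₁ generalizing l₂ with
  | nil => cases l₂ <;> simp_all
  | cons b l ih =>
    rcases l₂ with _ | ⟨c, l₂⟩
    · simp only [List.cons_append, List.nil_append, List.cons.injEq, List.mem_cons, not_or] at h h₁
      exact absurd h.1.symm h₁.1
    · simp only [List.cons_append, List.cons.injEq, List.mem_cons, not_or] at h h₁ h₂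
      obtain ⟨rfl, rfl⟩ := ih h₁.2 h₂.2 h.2
      simp [h.1]

lemma starWord_inj {P M Q P' M' Q' : List (Option Bool)} (h : starWord P M Q = starWord P' M' Q') :
    P = P' ∧ M = M' ∧ Q = Q' := by
  have hi := List.map_injective_iff.2 stepColumn_injective
  obtain ⟨h1, h⟩ := append_cons_inj_of_notMem (star_notMem_map_stepColumn _)
    (star_notMem_map_stepColumn _) h
  obtain ⟨h2, h3⟩ := append_cons_inj_of_notMem (star_notMem_map_stepColumn _)
    (star_notMem_map_stepColumn _) h
  exact ⟨hi h1, hi h2, hi h3⟩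

/-- The triples of Motzkin words parametrising the paths counted for semilength `n`. -/
def specialTriples (n : ℕ) : Set (List (Option Bool) × List (Option Bool) × List (Option Bool)) :=
  {t | t.1.length + t.2.1.length + t.2.2.length + 5 = n ∧
    IsSpecialPrefix (t.2.1.count (some false)) t.1 ∧
    IsSpecialPrefix (t.2.1.count (some true)) t.2.2}

lemma ncard_hatColumnWords {n : ℕ} (hn : 3 < n) :
    {c | IsColumnWord n c ∧ IsHatColumnWord c}.ncard = (specialTriples n).ncard := by
  symm
  refine Set.ncard_congr
    (fun t _ => starWord t.1 (some true :: (t.2.1 ++ [some false])) (flipRev t.2.2)) ?_ ?_ ?_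
  · rintro ⟨P, w, Q⟩ ⟨hl, hP, hQ⟩
    have := (isHatTriple_iff (n := n) (P := P) (w := w) (Q := flipRev Q)).2
      ⟨by simpa only [length_flipRev] using hl, hP, by simpa only [flipRev_flipRev] using hQ⟩
    exact ⟨this.1, (isHatColumnWord_iff _).2 ⟨_, _, _, rfl, this.2⟩⟩
  · rintro ⟨P, w, Q⟩ ⟨P', w', Q'⟩ - - h
    obtain ⟨h1, h2, h3⟩ := starWord_inj h
    have h4 : Q = Q' := by simpa only [flipRev_flipRev] using congrArg flipRev h3
    simp at h1 h2
    rw [h1, h2, h4]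
  · rintro c ⟨hc, hh⟩
    obtain ⟨P, M, Q, rfl, h⟩ := (isHatColumnWord_iff _).1 hh
    rcases h.eq_nil_or_exists with rfl | ⟨w, rfl⟩
    · obtain ⟨hl, hd, hP, hQ⟩ := (isColumnWord_starWord_iff h.1).1 hc
      obtain ⟨rfl, rfl⟩ := h.eq_nil hP hQ (by simpa using hd)
      simp at hl
      omega
    · obtain ⟨hl, hP, hQ⟩ := isHatTriple_iff.1 ⟨hc, h⟩
      exact ⟨(P, w, flipRev Q), ⟨by simpa only [length_flipRev] using hl, hP, hQ⟩,
        by simp only [flipRev_flipRev]⟩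

lemma hatColumnWords_three :
    {c | IsColumnWord 3 c ∧ IsHatColumnWord c} = {starWord [] [] []} := by
  ext c
  simp only [Set.mem_ofPred_eq, Set.mem_singleton_iff]
  constructor
  · rintro ⟨hc, hh⟩
    obtain ⟨P, M, Q, rfl, h⟩ := (isHatColumnWord_iff _).1 hh
    obtain ⟨hl, -⟩ := (isColumnWord_starWord_iff h.1).1 hc
    have hP : P = [] := List.eq_nil_of_length_eq_zero (by omega)
    have hM : M = [] := List.eq_nil_of_length_eq_zero (by omega)
    have hQ : Q = [] := List.eq_nil_of_length_eq_zero (by omega)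
    rw [hP, hM, hQ]
  · rintro rfl
    refine ⟨(isColumnWord_starWord_iff rfl).2 ?_, (isHatColumnWord_iff _).2 ⟨[], [], [], rfl, ?_⟩⟩
    · simp [IsMotzkinPrefix, flipRev]
    · simp [IsHatTriple, starWord, follow]

/-- Insert an up step immediately after the `d`-th up step. -/
def insertUp : ℕ → List (Option Bool) → List (Option Bool)
  | 0, l => some true :: l
  | _ + 1, [] => []
  | d + 1, some true :: l => some true :: insertUp d l
  | d + 1, some false :: l => some false :: insertUp (d + 1) l
  | d + 1, none :: l => none :: insertUp (d + 1) l

lemma exists_insertUp_eq_append {d : ℕ} {l : List (Option Bool)} (h : d ≤ l.count (some true)) :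
    ∃ l₁ l₂, l = l₁ ++ l₂ ∧ insertUp d l = l₁ ++ some true :: l₂ ∧ l₁.count (some true) = d := by
  induction l generalizing d with
  | nil =>
    obtain rfl : d = 0 := by simpa using h
    exact ⟨[], [], rfl, rfl, rfl⟩
  | cons s l ih =>
    rcases d with _ | d
    · exact ⟨[], s :: l, rfl, rfl, rfl⟩
    · rcases s with _ | _ | _
      · obtain ⟨a, b, rfl, h2, h3⟩ := ih (d := d + 1) (by simpa using h)
        exact ⟨none :: a, b, rfl, by rw [insertUp, h2]; rfl, by simpa using h3⟩
      · obtain ⟨a, b, rfl, h2, h3⟩ := ih (d := d + 1) (by simpa using h)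
        exact ⟨some false :: a, b, rfl, by rw [insertUp, h2]; rfl, by simpa using h3⟩
      · obtain ⟨a, b, rfl, h2, h3⟩ := ih (d := d) (by simpa using h)
        exact ⟨some true :: a, b, rfl, by rw [insertUp, h2]; rfl, by simpa using h3⟩

lemma insertUp_injOn {d : ℕ} {l l' : List (Option Bool)} (h : d ≤ l.count (some true))
    (h' : d ≤ l'.count (some true)) (he : insertUp d l = insertUp d l') : l = l' := by
  induction l generalizing d l' with
  | nil =>
    obtain rfl : d = 0 := by simpa using h
    simpa [insertUp] using he
  | cons s l ih =>
    rcases d with _ | d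
    · simpa [insertUp] using he
    · rcases l' with _ | ⟨s', l'⟩
      · simp at h'
      · rcases s with _ | _ | _ <;> rcases s' with _ | _ | _ <;>
          simp only [insertUp, List.cons.injEq, reduceCtorEq, Option.some.injEq, false_and,
            true_and] at he <;>
          rw [ih (by simpa using h) (by simpa using h') he]

lemma follow_insertUp {d : ℕ} {l : List (Option Bool)} (h : d ≤ l.count (some true)) :
    follow (((insertUp d l).map stepColumn).map Prod.snd) d = true := by
  induction l generalizing d with
  | nil =>
    obtain rfl : d = 0 := by simpa using h
    rfl
  | cons s l ih =>
    rcases d with _ | d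
    · rfl
    · rcases s with _ | _ | _ <;>
        exact ih (by simpa using h)

lemma exists_insertUp_eq {d : ℕ} {P : List (Option Bool)}
    (h : follow ((P.map stepColumn).map Prod.snd) d = true) :
    ∃ l, d ≤ l.count (some true) ∧ insertUp d l = P := by
  induction P generalizing d with
  | nil => simp [follow] at h
  | cons s P ih =>
    rcases d with _ | d
    · rcases s with _ | _ | _
      · simp [follow, stepColumn] at h
      · simp [follow, stepColumn] at h
      · exact ⟨P, Nat.zero_le _, by rw [insertUp]⟩
    · rcases s with _ | _ | _
      · obtain ⟨l, h1, rfl⟩ := ih (d := d + 1) h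
        exact ⟨none :: l, by simpa using h1, rfl⟩
      · obtain ⟨l, h1, rfl⟩ := ih (d := d + 1) h
        exact ⟨some false :: l, by simpa using h1, rfl⟩
      · obtain ⟨l, h1, rfl⟩ := ih (d := d) h
        exact ⟨some true :: l, by simpa using h1, rfl⟩

/-- Motzkin prefixes ending at height `a`. -/
def IsBallot (a : ℕ) (l : List (Option Bool)) : Prop :=
  IsMotzkinPrefix l ∧ l.count (some true) = l.count (some false) + a

lemma IsBallot.count_le {a : ℕ} {l : List (Option Bool)} (h : IsBallot a l) :
    l.count (some false) ≤ l.count (some true) :=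
  h.1 l List.prefix_rfl

lemma length_insertUp {d : ℕ} {l : List (Option Bool)} (h : d ≤ l.count (some true)) :
    (insertUp d l).length = l.length + 1 := by
  obtain ⟨a, b, rfl, h2, -⟩ := exists_insertUp_eq_append h
  rw [h2]; simp; omega

lemma count_false_insertUp {d : ℕ} {l : List (Option Bool)} (h : d ≤ l.count (some true)) :
    (insertUp d l).count (some false) = l.count (some false) := by
  obtain ⟨a, b, rfl, h2, -⟩ := exists_insertUp_eq_append h
  rw [h2]; simp

lemma isSpecialPrefix_insertUp_iff {a : ℕ} {l : List (Option Bool)}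
    (h : l.count (some false) ≤ l.count (some true)) :
    IsSpecialPrefix a (insertUp (l.count (some false)) l) ↔ IsBallot a l := by
  have hf := follow_insertUp h
  have hc := count_false_insertUp h
  obtain ⟨x, y, hl, h2, h3⟩ := exists_insertUp_eq_append h
  have hu : (insertUp (l.count (some false)) l).count (some true) = l.count (some true) + 1 := by
    rw [h2, hl]; simp; omega
  have hm : IsMotzkinPrefix (insertUp (l.count (some false)) l) ↔ IsMotzkinPrefix l := by
    have hy : ∀ q, q <+: y →
        x.count (some false) + q.count (some false) ≤ x.count (some true) := fun q hq => by
      have := hq.sublist.count_le (some false)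
      rw [h3, hl, List.count_append]; omega
    rw [h2]
    conv_rhs => rw [hl]
    rw [IsMotzkinPrefix, IsMotzkinPrefix, forall_prefix_append_iff, forall_prefix_append_iff]
    refine and_congr_right fun _ => ⟨fun _ q hq => ?_, fun _ q hq => ?_⟩
    · have := hy q hq
      simp only [List.count_append]; omega
    · rcases q with _ | ⟨s, q⟩
      · have := hy [] List.nil_prefix
        simpa using this
      · obtain ⟨rfl, hq'⟩ := List.cons_prefix_cons.1 hq
        have := hy q hq'
        simp; omega
  rw [IsSpecialPrefix, IsBallot, hm, hu, hc]
  simp only [hf, and_true]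
  refine and_congr_right fun _ => ?_
  omega

/-- The triples obtained from `specialTriples` by deleting an up step from the outer words. -/
def ballotTriples (m : ℕ) : Set (List (Option Bool) × List (Option Bool) × List (Option Bool)) :=
  {t | t.1.length + t.2.1.length + t.2.2.length = m ∧
    IsBallot (t.2.1.count (some false)) t.1 ∧ IsBallot (t.2.1.count (some true)) t.2.2}

lemma exists_isBallot_of_isSpecialPrefix {a : ℕ} {P : List (Option Bool)}
    (h : IsSpecialPrefix a P) :
    ∃ l, IsBallot a l ∧ insertUp (l.count (some false)) l = P ∧ l.length + 1 = P.length := by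
  obtain ⟨l, h1, h2⟩ := exists_insertUp_eq h.2.2
  have hc := count_false_insertUp h1
  have hl := length_insertUp h1
  rw [h2] at hc hl
  rw [hc] at h1 h2
  exact ⟨l, (isSpecialPrefix_insertUp_iff h1).1 (h2 ▸ h), h2, hl.symm⟩

lemma IsBallot.insertUp_inj {a b : ℕ} {l l' : List (Option Bool)} (h : IsBallot a l)
    (h' : IsBallot b l')
    (he : insertUp (l.count (some false)) l = insertUp (l'.count (some false)) l') : l = l' := by
  have h1 := h.count_le
  have h2 := h'.count_le
  have hc : l.count (some false) = l'.count (some false) := by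
    rw [← count_false_insertUp h1, he, count_false_insertUp h2]
  rw [hc] at h1 he
  exact insertUp_injOn h1 h2 he

lemma ncard_specialTriples (m : ℕ) : (specialTriples (m + 7)).ncard = (ballotTriples m).ncard := by
  symm
  refine Set.ncard_congr (fun t _ => (insertUp (t.1.count (some false)) t.1, t.2.1,
    insertUp (t.2.2.count (some false)) t.2.2)) ?_ ?_ ?_
  · rintro ⟨P, w, Q⟩ ⟨hl, hP, hQ⟩
    have h1 := hP.count_le
    have h2 := hQ.count_le
    refine ⟨?_, (isSpecialPrefix_insertUp_iff h1).2 hP, (isSpecialPrefix_insertUp_iff h2).2 hQ⟩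
    simp only [length_insertUp h1, length_insertUp h2] at hl ⊢
    omega
  · rintro ⟨P, w, Q⟩ ⟨P', w', Q'⟩ ⟨-, hP, hQ⟩ ⟨-, hP', hQ'⟩ h
    simp only [Prod.mk.injEq] at h
    exact Prod.ext (hP.insertUp_inj hP' h.1) (Prod.ext h.2.1 (hQ.insertUp_inj hQ' h.2.2))
  · rintro ⟨P, w, Q⟩ ⟨hl, hP, hQ⟩
    obtain ⟨p, hp, rfl, hp'⟩ := exists_isBallot_of_isSpecialPrefix hP
    obtain ⟨q, hq, rfl, hq'⟩ := exists_isBallot_of_isSpecialPrefix hQ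
    exact ⟨(p, w, q), ⟨by dsimp only at *; omega, hp, hq⟩, rfl⟩

open PowerSeries in
lemma coeff_eq_zero_of_recurrence {R : Type*} [CommRing R] {E : ℕ → PowerSeries R}
    (h0 : E 0 = X * (E 0 + E 1)) (h : ∀ a, E (a + 1) = X * (E a + E (a + 1) + E (a + 2)))
    (a : ℕ) : E a = 0 := by
  have key : ∀ p a, coeff p (E a) = 0 := by
    intro p
    induction p with
    | zero =>
      rintro (_ | a)
      · rw [h0, coeff_zero_X_mul]
      · rw [h, coeff_zero_X_mul]
    | succ p ih =>
      rintro (_ | a)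
      · rw [h0, coeff_succ_X_mul, map_add, ih, ih, add_zero]
      · rw [h, coeff_succ_X_mul, map_add, map_add, ih, ih, ih, add_zero, add_zero]
  ext p
  rw [key, map_zero]

/-- The words of length `l` on the alphabet of Motzkin steps. -/
def stepWords : ℕ → Finset (List (Option Bool))
  | 0 => {[]}
  | l + 1 => (stepWords l ×ˢ (Finset.univ : Finset (Option Bool))).image fun t => t.1 ++ [t.2]

lemma mem_stepWords {l : ℕ} {w : List (Option Bool)} : w ∈ stepWords l ↔ w.length = l := by
  induction l generalizing w with
  | zero => simp [stepWords]
  | succ l ih =>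
    simp only [stepWords, Finset.mem_image, Finset.mem_product, Finset.mem_univ, and_true,
      Prod.exists, ih]
    constructor
    · rintro ⟨v, s, rfl, rfl⟩
      simp
    · intro h
      rcases List.eq_nil_or_concat w with rfl | ⟨v, s, rfl⟩
      · simp at h
      · exact ⟨v, s, by simpa using h, by simp⟩

lemma sum_stepWords_succ {R : Type*} [AddCommMonoid R] (l : ℕ) (f : List (Option Bool) → R) :
    ∑ w ∈ stepWords (l + 1), f w =
      ∑ w ∈ stepWords l, (f (w ++ [none]) + f (w ++ [some true]) + f (w ++ [some false])) := by
  rw [stepWords, Finset.sum_image, Finset.sum_product]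
  · refine Finset.sum_congr rfl fun w _ => ?_
    simp [Fintype.sum_option, add_assoc]
  · rintro ⟨v, s⟩ - ⟨v', s'⟩ - h
    simpa using h

open Classical in
/-- The Motzkin prefixes of length `p` ending at height `a`. -/
noncomputable def ballotWords (a p : ℕ) : Finset (List (Option Bool)) :=
  (stepWords p).filter (IsBallot a)

lemma card_ballotWords_zero_left (p : ℕ) : (ballotWords 0 p).card = motzkin p := by
  rw [motzkin, ← Set.ncard_coe_finset]
  congr 1
  ext w
  simp only [ballotWords, Finset.coe_filter, mem_stepWords, Set.mem_ofPred_eq, IsBallot,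
    IsMotzkinWord, IsMotzkinPrefix]
  tauto

lemma isMotzkinPrefix_append_singleton (w : List (Option Bool)) (s : Option Bool) :
    IsMotzkinPrefix (w ++ [s]) ↔ IsMotzkinPrefix w ∧
      (w ++ [s]).count (some false) ≤ (w ++ [s]).count (some true) := by
  rw [IsMotzkinPrefix, IsMotzkinPrefix, forall_prefix_append_iff]
  constructor
  · exact fun h => ⟨h.1, h.2 _ List.prefix_rfl⟩
  · rintro ⟨h1, h2⟩
    refine ⟨h1, fun p hp => ?_⟩
    rcases p with _ | ⟨a, p⟩
    · simpa using h1 w List.prefix_rfl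
    · obtain ⟨rfl, hp'⟩ := List.cons_prefix_cons.1 hp
      rwa [List.prefix_nil.1 hp']

lemma isBallot_append_none {a : ℕ} {w : List (Option Bool)} :
    IsBallot a (w ++ [none]) ↔ IsBallot a w := by
  rw [IsBallot, IsBallot, isMotzkinPrefix_append_singleton, and_assoc]
  refine and_congr_right fun _ => ?_
  simp; omega

lemma isBallot_append_false {a : ℕ} {w : List (Option Bool)} :
    IsBallot a (w ++ [some false]) ↔ IsBallot (a + 1) w := by
  rw [IsBallot, IsBallot, isMotzkinPrefix_append_singleton, and_assoc]
  refine and_congr_right fun _ => ?_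
  simp; omega

lemma isBallot_succ_append_true {a : ℕ} {w : List (Option Bool)} :
    IsBallot (a + 1) (w ++ [some true]) ↔ IsBallot a w := by
  rw [IsBallot, IsBallot, isMotzkinPrefix_append_singleton, and_assoc]
  refine and_congr_right fun _ => ?_
  simp; omega

lemma not_isBallot_zero_append_true {w : List (Option Bool)} :
    ¬ IsBallot 0 (w ++ [some true]) := by
  rintro ⟨h, h'⟩
  have := ((isMotzkinPrefix_append_singleton _ _).1 h).1 w List.prefix_rfl
  simp at h'
  omega

open Classical in
lemma card_ballotWords_zero_succ (p : ℕ) :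
    (ballotWords 0 (p + 1)).card = (ballotWords 0 p).card + (ballotWords 1 p).card := by
  simp only [ballotWords, Finset.card_filter, sum_stepWords_succ, isBallot_append_none,
    isBallot_append_false, not_isBallot_zero_append_true, Finset.sum_add_distrib, if_false,
    add_zero, zero_add]

open Classical in
lemma card_ballotWords_succ_succ (a p : ℕ) :
    (ballotWords (a + 1) (p + 1)).card =
      (ballotWords a p).card + (ballotWords (a + 1) p).card + (ballotWords (a + 2) p).card := by
  simp only [ballotWords, Finset.card_filter, sum_stepWords_succ, isBallot_append_none,
    isBallot_append_false, isBallot_succ_append_true, Finset.sum_add_distrib]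
  ring

lemma card_ballotWords_zero_right (a : ℕ) :
    (ballotWords a 0).card = if a = 0 then 1 else 0 := by
  have : IsBallot a [] ↔ a = 0 := by simp [IsBallot, IsMotzkinPrefix, eq_comm]
  simp only [ballotWords, Finset.card_filter, stepWords, Finset.sum_singleton, this]

open PowerSeries

/-- The generating function of the Motzkin prefixes ending at height `a`. -/
noncomputable def ballotSeries (a : ℕ) : ℤ⟦X⟧ := PowerSeries.mk fun p => ((ballotWords a p).card : ℤ)

lemma ballotSeries_zero :
    ballotSeries 0 = 1 + X * (ballotSeries 0 + ballotSeries 1) := by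
  ext (_ | p)
  · rw [map_add, coeff_zero_X_mul]
    simp [ballotSeries, card_ballotWords_zero_right]
  · rw [map_add, coeff_succ_X_mul]
    simp [ballotSeries, card_ballotWords_zero_succ, coeff_one]

lemma ballotSeries_succ (a : ℕ) : ballotSeries (a + 1) =
    X * (ballotSeries a + ballotSeries (a + 1) + ballotSeries (a + 2)) := by
  ext (_ | p)
  · rw [coeff_zero_X_mul]
    simp [ballotSeries, card_ballotWords_zero_right]
  · rw [coeff_succ_X_mul]
    simp [ballotSeries, card_ballotWords_succ_succ]

lemma ballotSeries_succ_eq_mul (a : ℕ) :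
    ballotSeries (a + 1) = X * ballotSeries 0 * ballotSeries a := by
  have := coeff_eq_zero_of_recurrence
    (E := fun a => X * ballotSeries 0 * ballotSeries a - ballotSeries (a + 1)) ?_ ?_ a
  · exact (sub_eq_zero.1 this).symm
  · linear_combination (X * ballotSeries 0) * ballotSeries_zero - ballotSeries_succ 0
  · intro a
    linear_combination (X * ballotSeries 0) * ballotSeries_succ a - ballotSeries_succ (a + 1)

lemma sum_stepWords_ballotSeries (l : ℕ) :
    ∑ w ∈ stepWords l, ballotSeries (w.count (some false)) * ballotSeries (w.count (some true)) =
      ballotSeries 0 ^ 2 * (1 + 2 * X * ballotSeries 0) ^ l := by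
  induction l with
  | zero => simp [stepWords]; ring
  | succ l ih =>
    rw [sum_stepWords_succ, pow_succ _ l, ← mul_assoc, ← ih, Finset.sum_mul]
    refine Finset.sum_congr rfl fun w _ => ?_
    simp [ballotSeries_succ_eq_mul]
    ring

lemma ncard_ballotTriples (m : ℕ) : ((ballotTriples m).ncard : ℤ) =
    ∑ k ∈ Finset.HasAntidiagonal.antidiagonal m, ∑ w ∈ stepWords k.1,
      coeff k.2 (ballotSeries (w.count (some false)) * ballotSeries (w.count (some true))) := by
  have hc : (ballotTriples m).ncard = ((Finset.HasAntidiagonal.antidiagonal m).sigma fun k =>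
      (stepWords k.1).sigma fun w => (Finset.HasAntidiagonal.antidiagonal k.2).sigma fun j =>
        ballotWords (w.count (some false)) j.1 ×ˢ ballotWords (w.count (some true)) j.2).card := by
    rw [← Set.ncard_coe_finset]
    symm
    refine Set.ncard_congr (fun s _ => (s.2.2.2.1, s.2.1, s.2.2.2.2)) ?_ ?_ ?_
    · rintro ⟨⟨l, r⟩, w, ⟨p, q⟩, P, Q⟩ h
      simp only [ballotWords, Finset.coe_sigma, Set.mem_sigma_iff, Finset.mem_coe,
        Finset.HasAntidiagonal.mem_antidiagonal, Finset.mem_product, Finset.mem_filter,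
        mem_stepWords] at h
      obtain ⟨h1, h2, h3, ⟨h4, h5⟩, h6, h7⟩ := h
      exact ⟨by simp only; omega, h5, h7⟩
    · rintro ⟨⟨l, r⟩, w, ⟨p, q⟩, P, Q⟩ ⟨⟨l', r'⟩, w', ⟨p', q'⟩, P', Q'⟩ h h' he
      simp only [ballotWords, Finset.coe_sigma, Set.mem_sigma_iff, Finset.mem_coe,
        Finset.HasAntidiagonal.mem_antidiagonal, Finset.mem_product, Finset.mem_filter,
        mem_stepWords] at h h'
      simp only [Prod.mk.injEq] at he
      obtain ⟨rfl, rfl, rfl⟩ := he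
      obtain ⟨h1, rfl, h3, ⟨rfl, -⟩, rfl, -⟩ := h
      obtain ⟨h1', rfl, h3', ⟨rfl, -⟩, rfl, -⟩ := h'
      obtain rfl : r = r' := by omega
      rfl
    · rintro ⟨P, w, Q⟩ ⟨h, hP, hQ⟩
      refine ⟨⟨(w.length, P.length + Q.length), w, (P.length, Q.length), P, Q⟩, ?_, rfl⟩
      simp only [ballotWords, Finset.coe_sigma, Set.mem_sigma_iff, Finset.mem_coe,
        Finset.HasAntidiagonal.mem_antidiagonal, Finset.mem_product, Finset.mem_filter,
        mem_stepWords]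
      exact ⟨by dsimp only at h; omega, trivial, trivial, ⟨trivial, hP⟩, trivial, hQ⟩
  rw [hc]
  simp [Finset.card_sigma, Finset.card_product, coeff_mul, ballotSeries]

lemma derivative_X_mul_ballotSeries :
    d⁄dX ℤ (X * ballotSeries 0) * (1 - X * (1 + 2 * X * ballotSeries 0)) = ballotSeries 0 := by
  have h : ballotSeries 0 = 1 + X * ballotSeries 0 + (X * ballotSeries 0) ^ 2 := by
    linear_combination ballotSeries_zero + X * ballotSeries_succ_eq_mul 0
  have hd : X * ballotSeries 0 = X * (1 + X * ballotSeries 0 + (X * ballotSeries 0) ^ 2) := by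
    rw [← h]
  have hd' := congrArg (d⁄dX ℤ) hd
  rw [Derivation.leibniz _ X (1 + _ + _)] at hd'
  simp only [map_add, Derivation.leibniz_pow, smul_eq_mul, derivative_X,
    Derivation.map_one_eq_zero] at hd'
  rw [← h] at hd'
  linear_combination hd'

lemma sum_eq_coeff (m : ℕ) :
    ∑ k ∈ Finset.HasAntidiagonal.antidiagonal m,
      coeff k.2 (ballotSeries 0 ^ 2 * (1 + 2 * X * ballotSeries 0) ^ k.1) =
    coeff m (d⁄dX ℤ (X * ballotSeries 0) * ballotSeries 0) := by
  set g := ballotSeries 0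
  set z := X * (1 + 2 * X * g)
  have h1 : ∀ k ∈ Finset.HasAntidiagonal.antidiagonal m, coeff k.2 (g ^ 2 * (1 + 2 * X * g) ^ k.1) =
      coeff m (g ^ 2 * z ^ k.1) := by
    intro k hk
    rw [← Finset.HasAntidiagonal.mem_antidiagonal.1 hk, mul_pow, mul_left_comm, add_comm k.1,
      coeff_X_pow_mul]
  rw [Finset.sum_congr rfl h1, Finset.Nat.sum_antidiagonal_eq_sum_range_succ
    (fun i _ => coeff m (g ^ 2 * z ^ i)), ← map_sum, ← Finset.mul_sum]
  have h2 : g ^ 2 * ∑ i ∈ Finset.range (m + 1), z ^ i =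
      d⁄dX ℤ (X * g) * g - X ^ (m + 1) * ((1 + 2 * X * g) ^ (m + 1) * d⁄dX ℤ (X * g) * g) := by
    have h3 := geom_sum_mul_neg z (m + 1)
    have h4 : z ^ (m + 1) = X ^ (m + 1) * (1 + 2 * X * g) ^ (m + 1) := mul_pow _ _ _
    rw [h4] at h3
    linear_combination d⁄dX ℤ (X * g) * g * h3 -
      g * (∑ i ∈ Finset.range (m + 1), z ^ i) * derivative_X_mul_ballotSeries
  rw [h2, map_sub, coeff_X_pow_mul', if_neg (by omega), sub_zero]

lemma coeff_derivative_mul_ballotSeries (m : ℕ) :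
    coeff m (d⁄dX ℤ (X * ballotSeries 0) * ballotSeries 0) =
      ((∑ i ∈ Finset.range (m + 1), (i + 1) * motzkin i * motzkin (m - i) : ℕ) : ℤ) := by
  rw [coeff_mul, Finset.Nat.sum_antidiagonal_eq_sum_range_succ
    (fun i j => coeff i (d⁄dX ℤ (X * ballotSeries 0)) * coeff j (ballotSeries 0))]
  push_cast
  refine Finset.sum_congr rfl fun i _ => ?_
  rw [coeff_derivative, coeff_succ_X_mul, ballotSeries, coeff_mk, coeff_mk,
    card_ballotWords_zero_left, card_ballotWords_zero_left]
  ring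

lemma ncard_ballotTriples_eq (m : ℕ) : (ballotTriples m).ncard =
    ∑ i ∈ Finset.range (m + 1), (i + 1) * motzkin i * motzkin (m - i) := by
  have := ncard_ballotTriples m
  simp only [← map_sum, sum_stepWords_ballotSeries] at this
  rw [sum_eq_coeff, coeff_derivative_mul_ballotSeries] at this
  exact_mod_cast this

/-- **Lemma.** For `n ≥ 7`, the number of Dyck paths `D ∈ 𝒟̂ₙ` with `x₁(D) = y₂(D)` is
`Σ_{i=0}^{n-7} (i+1)·Mᵢ·M_{n-7-i}`; moreover for `n = 3` there is exactly one such path. -/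
theorem dyckHat_x1_eq_y2_count :
    (∀ n : ℕ, 7 ≤ n →
      {w | IsDyckWord n w ∧ LStat n w = 4 ∧ ∃ k₁ k₂, twoStars n w k₁ k₂ ∧
          xStat w k₁ = yStat w k₂}.ncard =
        ∑ i ∈ Finset.range (n - 7 + 1), (i + 1) * motzkin i * motzkin (n - 7 - i)) ∧
    {w | IsDyckWord 3 w ∧ LStat 3 w = 4 ∧ ∃ k₁ k₂, twoStars 3 w k₁ k₂ ∧
        xStat w k₁ = yStat w k₂}.ncard = 1 := by
  constructor
  · intro n hn
    obtain ⟨m, rfl⟩ := Nat.exists_eq_add_of_le' hn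
    rw [ncard_dyckHat (by omega), ncard_hatColumnWords (by omega), ncard_specialTriples,
      ncard_ballotTriples_eq, Nat.add_sub_cancel]
  · rw [ncard_dyckHat (by omega), hatColumnWords_three, Set.ncard_singleton]
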